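/- Assume condition (G) holds and that there exists ζ=(ξ,η) with φ(ζ)=1 and η<0 such that φ is finite in a neighbourhood of ζ and in a neighbourhood of (0,η); let v=E_ζ[S_1]/E_ζ[R_1]. Then V(ζ)>0, and for every a≥0 and b∈ℝ: for all sequences y_n→∞ and x_n>0 with (x_n−v y_n)/y_n^{1/2}→0, one has K_{a,b}(x_n,y_n) / ( x_n^{−1/2} e^{x_n ξ + y_n η} ) → D(a,b), where D(a,b)=C(a,b)·(2π V(ζ))^{−1/2}. -/

import Mathlib

open MeasureTheory Filter Set ENNReal

/-- Convolution of two measures on `ℝ × ℝ` (coordinatewise addition). -/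
noncomputable def mconv (μ ν : Measure (ℝ × ℝ)) : Measure (ℝ × ℝ) :=
  Measure.map (fun p : (ℝ × ℝ) × (ℝ × ℝ) => p.1 + p.2) (μ.prod ν)

/-- `n`-fold convolution power `F^{⋆n}` (with `F^{⋆0} = δ_{(0,0)}`). -/
noncomputable def iterConv (F : Measure (ℝ × ℝ)) : ℕ → Measure (ℝ × ℝ)
  | 0 => Measure.dirac 0
  | n + 1 => mconv (iterConv F n) F

/-- Bivariate Laplace transform `φ(u,w) = ∬ e^{-us-wr} F(ds,dr)`. -/
noncomputable def biLaplace (F : Measure (ℝ × ℝ)) (u w : ℝ) : ℝ≥0∞ :=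
  ∫⁻ p, ENNReal.ofReal (Real.exp (-(u * p.1 + w * p.2))) ∂F

/-- Topological support of a measure on `ℝ × ℝ`. -/
def msupport (F : Measure (ℝ × ℝ)) : Set (ℝ × ℝ) :=
  {p | ∀ U : Set (ℝ × ℝ), IsOpen U → p ∈ U → 0 < F U}

/-- `K_{a,b}(x,y) = P(N(x) < ∞, S_{N(x)} > x + a, R_{N(x)} ≥ y + b)` for the (possibly
killed) random walk with step distribution `F` and nonnegative steps: since the first
component is nondecreasing, `N(x) = n + 1` exactly when `S_n ≤ x < S_{n+1}`, so the
probability is the displayed renewal sum. -/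
noncomputable def hoglundK (F : Measure (ℝ × ℝ)) (a b x y : ℝ) : ℝ≥0∞ :=
  ∑' n : ℕ, ∫⁻ p in {p : ℝ × ℝ | p.1 ≤ x},
    F {q : ℝ × ℝ | x + a < p.1 + q.1 ∧ y + b ≤ p.2 + q.2} ∂(iterConv F n)

/-- triangle function -/
noncomputable def tri (θ : ℝ) : ℝ := max (1 - |θ|) 0

/-- Fejer kernel -/
noncomputable def fej (x : ℝ) : ℝ := if x = 0 then 1 else 2 * (1 - Real.cos x) / x ^ 2

noncomputable def kap (θ : ℝ) : ℂ := (tri θ : ℂ) * (1 + Complex.exp ((-(Real.pi * θ) : ℝ) * Complex.I))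

noncomputable def HH (x : ℝ) : ℝ := fej x + fej (x - Real.pi)

lemma tri_cont : Continuous tri := by unfold tri; fun_prop

lemma tri_zero_of (θ : ℝ) (h : θ ∉ Icc (-1:ℝ) 1) : tri θ = 0 := by
  unfold tri
  apply max_eq_right
  by_contra hc
  push Not at hc
  apply h
  have := abs_lt.1 (by linarith : |θ| < 1)
  exact ⟨this.1.le, this.2.le⟩

lemma kap_cont : Continuous kap := by
  unfold kap
  have := tri_cont
  fun_prop

lemma kap_zero_of (θ : ℝ) (h : θ ∉ Icc (-1:ℝ) 1) : kap θ = 0 := by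
  simp [kap, tri_zero_of θ h]

lemma kap_supp : HasCompactSupport kap := 
  HasCompactSupport.intro isCompact_Icc kap_zero_of

lemma tri_supp : HasCompactSupport tri := 
  HasCompactSupport.intro isCompact_Icc tri_zero_of

lemma kap_integrable : Integrable kap := kap_cont.integrable_of_hasCompactSupport kap_supp
lemma tri_integrable : Integrable tri := tri_cont.integrable_of_hasCompactSupport tri_supp

lemma kap_zero : kap 0 = 2 := by
  simp [kap, tri]; norm_num

lemma tri_le_one (θ : ℝ) : |tri θ| ≤ 1 := by
  unfold tri
  rw [abs_of_nonneg (le_max_right _ _)]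
  apply max_le <;> linarith [abs_nonneg θ]

lemma kap_norm_le (θ : ℝ) : ‖kap θ‖ ≤ 2 := by
  unfold kap
  rw [norm_mul, Complex.norm_real]
  have h1 : ‖(1 + Complex.exp ((-(Real.pi * θ) : ℝ) * Complex.I))‖ ≤ 2 := by
    refine (norm_add_le _ _).trans ?_
    rw [Complex.norm_exp_ofReal_mul_I]; norm_num
  calc _ ≤ 1 * 2 := mul_le_mul (tri_le_one θ) h1 (norm_nonneg _) zero_le_one
    _ = 2 := by norm_num

lemma fej_eq (x : ℝ) : ((fej x : ℝ) : ℂ) = ∫ θ : ℝ, (tri θ : ℂ) * Complex.exp ((θ * x : ℝ) * Complex.I) := by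
  have hs : ∫ θ : ℝ, (tri θ : ℂ) * Complex.exp ((θ * x : ℝ) * Complex.I)
      = ∫ θ in (-1:ℝ)..1, (tri θ : ℂ) * Complex.exp ((θ * x : ℝ) * Complex.I) := by
    rw [intervalIntegral.integral_of_le (by norm_num), ← integral_Icc_eq_integral_Ioc]
    rw [setIntegral_eq_integral_of_forall_compl_eq_zero]
    intro θ h
    rw [tri_zero_of θ h]; simp
  have hc : Continuous fun θ : ℝ => (tri θ : ℂ) * Complex.exp ((θ * x : ℝ) * Complex.I) := by
    have := tri_cont
    fun_prop
  rw [hs, ← intervalIntegral.integral_add_adjacent_intervals (b := 0)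
    (hc.intervalIntegrable _ _) (hc.intervalIntegrable _ _)]
  have e1 : ∫ θ in (-1:ℝ)..0, (tri θ : ℂ) * Complex.exp ((θ * x : ℝ) * Complex.I)
     = ∫ θ in (-1:ℝ)..0, (1 + θ : ℂ) * Complex.exp ((θ * x : ℝ) * Complex.I) := by
    apply intervalIntegral.integral_congr
    intro θ hθ
    rw [uIcc_of_le (by norm_num)] at hθ
    have : tri θ = 1 + θ := by
      unfold tri; rw [abs_of_nonpos hθ.2, max_eq_left] <;> linarith [hθ.1]
    simp [this]
  have e2 : ∫ θ in (0:ℝ)..1, (tri θ : ℂ) * Complex.exp ((θ * x : ℝ) * Complex.I)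
     = ∫ θ in (0:ℝ)..1, (1 - θ : ℂ) * Complex.exp ((θ * x : ℝ) * Complex.I) := by
    apply intervalIntegral.integral_congr
    intro θ hθ
    rw [uIcc_of_le (by norm_num)] at hθ
    have : tri θ = 1 - θ := by
      unfold tri; rw [abs_of_nonneg hθ.1, max_eq_left]; linarith [hθ.2]
    simp [this]
  rw [e1, e2]
  by_cases hx : x = 0
  · subst hx
    have a1 : ∫ θ in (-1:ℝ)..0, (1 + θ : ℂ) = 1/2 := by
      have : ∫ θ in (-1:ℝ)..0, (1 + θ : ℂ) = ((∫ θ in (-1:ℝ)..0, (1 + θ) : ℝ) : ℂ) := by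
        rw [← intervalIntegral.integral_ofReal]; simp
      rw [this, intervalIntegral.integral_add (by simp) (by simp)]; simp; norm_num
    have a2 : ∫ θ in (0:ℝ)..1, (1 - θ : ℂ) = 1/2 := by
      have : ∫ θ in (0:ℝ)..1, (1 - θ : ℂ) = ((∫ θ in (0:ℝ)..1, (1 - θ) : ℝ) : ℂ) := by
        rw [← intervalIntegral.integral_ofReal]; simp
      rw [this, intervalIntegral.integral_sub (by simp) (by simp)]; simp; norm_num
    simp [fej, a1, a2]; norm_num
  · have hxI : (x : ℂ) * Complex.I ≠ 0 := by simp [hx]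
    set w := (x : ℂ) * Complex.I with hw
    have hE : ∀ θ : ℝ, HasDerivAt (fun θ : ℝ => Complex.exp ((θ * x : ℝ) * Complex.I)) 
        (w * Complex.exp ((θ * x : ℝ) * Complex.I)) θ := by
      intro θ
      have h1 : HasDerivAt (fun θ : ℝ => ((θ * x : ℝ) : ℂ) * Complex.I) w θ := by
        have := ((hasDerivAt_id θ).mul_const x).ofReal_comp.mul_const Complex.I
        simpa [hw] using this
      have := h1.cexp
      rwa [mul_comm] at this
    have b1 : ∫ θ in (-1:ℝ)..0, (1 + θ : ℂ) * Complex.exp ((θ * x : ℝ) * Complex.I) 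
        = 1 / w - 1 / w^2 + Complex.exp (-w) / w^2 := by
      rw [intervalIntegral.integral_eq_sub_of_hasDerivAt (f := fun θ : ℝ => 
        (1 + θ : ℂ) * Complex.exp ((θ * x : ℝ) * Complex.I) / w - Complex.exp ((θ * x : ℝ) * Complex.I) / w^2)]
      · simp [hw]
      · intro θ _
        have h0 : HasDerivAt (fun θ : ℝ => (1 + θ : ℂ)) 1 θ := by
          simpa using (hasDerivAt_id θ).ofReal_comp.const_add (1:ℂ)
        have := ((h0.mul (hE θ)).div_const w).sub ((hE θ).div_const (w^2))
        refine HasDerivAt.congr_deriv this ?_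
        simp only [one_mul]
        field_simp; ring
      · apply Continuous.intervalIntegrable; fun_prop
    have b2 : ∫ θ in (0:ℝ)..1, (1 - θ : ℂ) * Complex.exp ((θ * x : ℝ) * Complex.I) 
        = - 1 / w - 1 / w^2 + Complex.exp w / w^2 := by
      rw [intervalIntegral.integral_eq_sub_of_hasDerivAt (f := fun θ : ℝ => 
        (1 - θ : ℂ) * Complex.exp ((θ * x : ℝ) * Complex.I) / w + Complex.exp ((θ * x : ℝ) * Complex.I) / w^2)]
      · have e3 : Complex.exp (((1:ℝ) * x : ℝ) * Complex.I) = Complex.exp w := by simp [hw]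
        simp only [e3]
        simp; ring
      · intro θ _
        have h0 : HasDerivAt (fun θ : ℝ => (1 - θ : ℂ)) (-1) θ := by
          simpa using (hasDerivAt_id θ).ofReal_comp.const_sub (1:ℂ)
        have := ((h0.mul (hE θ)).div_const w).add ((hE θ).div_const (w^2))
        refine HasDerivAt.congr_deriv this ?_
        simp only [one_mul, neg_mul]
        field_simp; ring
      · apply Continuous.intervalIntegrable; fun_prop
    rw [b1, b2]
    have hcos := Complex.two_cos x
    have hw2 : w^2 = - (x:ℂ)^2 := by rw [hw, mul_pow, Complex.I_sq]; ring
    have hx' : (x:ℂ) ≠ 0 := by exact_mod_cast hx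
    simp only [fej, hx, if_false]
    push_cast
    have hneg : Complex.exp (-w) = Complex.exp (-x * Complex.I) := by rw [hw]; ring_nf
    rw [show 2 * (1 - Complex.cos x) = 2 - 2 * Complex.cos x by ring, hcos, ← hneg, ← hw]
    have : (2 - (Complex.exp w + Complex.exp (-w))) / (x:ℂ)^2 = ((Complex.exp w + Complex.exp (-w)) - 2) / w^2 := by
      rw [hw2]; field_simp; ring
    rw [this]; field_simp; ring

lemma fej_nonneg (x : ℝ) : 0 ≤ fej x := by
  unfold fej
  split_ifs
  · norm_num
  · have := Real.cos_le_one x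
    apply div_nonneg _ (sq_nonneg _); linarith

lemma fej_le (x : ℝ) : fej x ≤ 5 / (1 + x^2) := by
  unfold fej
  split_ifs with h
  · subst h; norm_num
  · have h1 := Real.one_sub_sq_div_two_le_cos (x := x)
    have h2 := Real.neg_one_le_cos x
    have : 0 < x^2 := by positivity
    rw [div_le_div_iff₀ this (by positivity)]
    by_cases h4 : x^2 ≤ 4
    · nlinarith
    · nlinarith

lemma fej_ge (x M : ℝ) (hM : 0 < M) (h : x^2 ≤ M) : 2 * (1 - Real.cos x) / M ≤ fej x := by
  unfold fej
  split_ifs with hx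
  · subst hx; simp
  · have := Real.cos_le_one x
    have : 0 < x^2 := by positivity
    gcongr

lemma pi_sq_lt : Real.pi ^ 2 < 10 := by
  have := Real.pi_lt_d2; have := Real.pi_pos; nlinarith

lemma HH_le (x : ℝ) : HH x ≤ 115 / (1 + x^2) := by
  unfold HH
  have h1 := fej_le x
  have h2 := fej_le (x - Real.pi)
  have h3 : 5 / (1 + (x - Real.pi)^2) ≤ 110 / (1 + x^2) := by
    rw [div_le_div_iff₀ (by positivity) (by positivity)]
    nlinarith [pi_sq_lt, sq_nonneg (x - 2 * Real.pi)]
  have : 115 / (1 + x^2) = 5 / (1+x^2) + 110 / (1 + x^2) := by ring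
  linarith

lemma HH_ge (x : ℝ) : 1 / (5 * (1 + x^2)) ≤ HH x := by
  unfold HH
  have h1 := fej_ge x (20 * (1 + x^2)) (by positivity) (by nlinarith [sq_nonneg x])
  have h2 := fej_ge (x - Real.pi) (20 * (1 + x^2)) (by positivity) 
    (by nlinarith [sq_nonneg (x + Real.pi), pi_sq_lt])
  rw [Real.cos_sub_pi] at h2
  have : 1 / (5 * (1 + x^2)) = 2 * (1 - Real.cos x) / (20 * (1 + x^2)) + 2 * (1 - - Real.cos x) / (20 * (1 + x^2)) := by
    field_simp; ring
  linarith

lemma HH_pos (x : ℝ) : 0 < HH x := lt_of_lt_of_le (by positivity) (HH_ge x)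

lemma HH_eq (x : ℝ) : ((HH x : ℝ) : ℂ) = ∫ θ : ℝ, kap θ * Complex.exp ((θ * x : ℝ) * Complex.I) := by
  unfold HH
  rw [Complex.ofReal_add, fej_eq, fej_eq, ← integral_add]
  · congr 1; ext θ
    unfold kap
    rw [mul_assoc, ← mul_add, add_mul, one_mul, ← Complex.exp_add]
    have : (((-(Real.pi * θ) : ℝ)) : ℂ) * Complex.I + ((θ * x : ℝ) : ℂ) * Complex.I = ((θ * (x - Real.pi) : ℝ) : ℂ) * Complex.I := by
      push_cast; ring
    rw [this]
  · refine (tri_integrable.ofReal (𝕜 := ℂ)).mul_bdd (c := 1) (by fun_prop) (ae_of_all _ fun θ => ?_)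
    rw [Complex.norm_exp_ofReal_mul_I]
  · refine (tri_integrable.ofReal (𝕜 := ℂ)).mul_bdd (c := 1) (by fun_prop) (ae_of_all _ fun θ => ?_)
    rw [Complex.norm_exp_ofReal_mul_I]

lemma HH_cont : Continuous HH := by
  have h : Continuous fun x : ℝ => ∫ θ : ℝ, kap θ * Complex.exp ((θ * x : ℝ) * Complex.I) := by
    apply continuous_of_dominated (bound := fun θ => ‖kap θ‖)
    · intro x
      have := kap_cont
      exact Continuous.aestronglyMeasurable (by fun_prop)
    · intro x
      refine ae_of_all _ fun θ => ?_
      rw [norm_mul, Complex.norm_exp_ofReal_mul_I, mul_one]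
    · exact kap_integrable.norm
    · refine ae_of_all _ fun θ => by fun_prop
  have h2 : HH = fun x => (∫ θ : ℝ, kap θ * Complex.exp ((θ * x : ℝ) * Complex.I)).re := by
    ext x; rw [← HH_eq]; simp
  rw [h2]
  exact Complex.continuous_re.comp h

lemma HH_integrable : Integrable HH := by
  refine (integrable_inv_one_add_sq.const_mul 115).mono' HH_cont.aestronglyMeasurable (ae_of_all _ fun x => ?_)
  rw [Real.norm_of_nonneg (HH_pos x).le]
  simpa [div_eq_mul_inv] using HH_le x

open FourierTransform in
lemma HH_four (s : ℝ) : ∫ x : ℝ, (HH x : ℂ) * Complex.exp ((x * s : ℝ) * Complex.I) = 2 * Real.pi * kap (-s) := by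
  have hpi := Real.pi_pos
  -- Fourier transform of kap
  have hF : ∀ u : ℝ, 𝓕 kap u = HH (-(2 * Real.pi * u)) := by
    intro u
    rw [HH_eq, Real.fourier_real_eq_integral_exp_smul]
    congr 1; ext v
    rw [smul_eq_mul, mul_comm]
    congr 3
    ring
  have hIntg : Integrable (𝓕 kap) := by
    have : 𝓕 kap = fun u : ℝ => ((HH (-(2 * Real.pi) * u) : ℝ) : ℂ) := by
      ext u; rw [hF]; ring_nf
    rw [this]
    exact (HH_integrable.comp_mul_left' (by simp [hpi.ne'])).ofReal
  have hinv := kap_integrable.fourierInv_fourier_eq hIntg kap_cont.continuousAt (v := -s)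
  rw [Real.fourierInv_eq_fourier_neg, Real.fourier_real_eq_integral_exp_smul] at hinv
  rw [← hinv]
  have := Measure.integral_comp_mul_left (fun x : ℝ => (HH x : ℂ) * Complex.exp ((x * s : ℝ) * Complex.I)) (-(2 * Real.pi))
  simp only [smul_eq_mul]
  have e : (fun v : ℝ => Complex.exp (((-2 * Real.pi * v * - -s : ℝ) : ℂ) * Complex.I) * 𝓕 kap v) = 
     fun v : ℝ => (HH (-(2 * Real.pi) * v) : ℂ) * Complex.exp ((-(2 * Real.pi) * v * s : ℝ) * Complex.I) := by
    ext v
    rw [hF, mul_comm]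
    ring_nf
  rw [e, this]
  rw [Complex.real_smul, abs_of_neg (by simp [hpi])]
  generalize (∫ (y : ℝ), (HH y : ℂ) * Complex.exp (((y * s : ℝ) : ℂ) * Complex.I)) = J
  have : (Real.pi : ℂ) ≠ 0 := by exact_mod_cast hpi.ne'
  push_cast
  field_simp

noncomputable def dot2 (θ p : ℝ × ℝ) : ℝ := θ.1 * p.1 + θ.2 * p.2

lemma dot2_cont : Continuous fun x : (ℝ × ℝ) × (ℝ × ℝ) => dot2 x.1 x.2 := by unfold dot2; fun_prop

@[fun_prop]
lemma Continuous.dot2' {X : Type*} [TopologicalSpace X] {f g : X → ℝ × ℝ} (hf : Continuous f) (hg : Continuous g) :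
    Continuous fun x => dot2 (f x) (g x) := by unfold dot2; fun_prop

noncomputable def cf2 (μ : Measure (ℝ × ℝ)) (θ : ℝ × ℝ) : ℂ := ∫ p, Complex.exp ((dot2 θ p : ℝ) * Complex.I) ∂μ

lemma fej_cont : Continuous fej := by
  have h : Continuous fun x : ℝ => ∫ θ : ℝ, (tri θ : ℂ) * Complex.exp ((θ * x : ℝ) * Complex.I) := by
    apply continuous_of_dominated (bound := fun θ => ‖tri θ‖)
    · intro x
      have := tri_cont
      exact Continuous.aestronglyMeasurable (by fun_prop)
    · intro x
      refine ae_of_all _ fun θ => ?_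
      rw [norm_mul, Complex.norm_exp_ofReal_mul_I, mul_one, Complex.norm_real]
    · exact tri_integrable.norm
    · refine ae_of_all _ fun θ => by fun_prop
  have h2 : fej = fun x => (∫ θ : ℝ, (tri θ : ℂ) * Complex.exp ((θ * x : ℝ) * Complex.I)).re := by
    ext x; rw [← fej_eq]; simp
  rw [h2]
  exact Complex.continuous_re.comp h

lemma fej_le5 (x : ℝ) : fej x ≤ 5 := by
  refine (fej_le x).trans ?_
  rw [div_le_iff₀ (by positivity)]; nlinarith [sq_nonneg x]

lemma one_sub_cos (v : ℝ) : 1 - Real.cos v = v^2 * fej v / 2 := by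
  unfold fej
  split_ifs with h
  · subst h; simp
  · field_simp

lemma exp_dot_integrable (μ : Measure (ℝ × ℝ)) [IsFiniteMeasure μ] {f : ℝ × ℝ → ℝ} (hf : Continuous f) :
    Integrable (fun p => Complex.exp ((f p : ℝ) * Complex.I)) μ := by
  refine Integrable.of_bound (C := 1) (Continuous.aestronglyMeasurable (by fun_prop)) (ae_of_all _ fun p => ?_)
  rw [Complex.norm_exp_ofReal_mul_I]

lemma cf2_cont (μ : Measure (ℝ × ℝ)) [IsFiniteMeasure μ] : Continuous (cf2 μ) := by
  unfold cf2
  apply continuous_of_dominated (bound := fun θ => 1)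
  · intro x
    exact Continuous.aestronglyMeasurable (by fun_prop)
  · intro x
    refine ae_of_all _ fun θ => ?_
    rw [Complex.norm_exp_ofReal_mul_I]
  · exact integrable_const _
  · refine ae_of_all _ fun θ => by fun_prop

lemma cf2_norm_sq (μ : Measure (ℝ × ℝ)) [IsProbabilityMeasure μ] (θ : ℝ × ℝ) :
    ‖cf2 μ θ‖^2 = ∫ x : (ℝ × ℝ) × (ℝ × ℝ), Real.cos (dot2 θ (x.1 - x.2)) ∂(μ.prod μ) := by
  have h1 : ((‖cf2 μ θ‖^2 : ℝ) : ℂ) = ∫ x : (ℝ × ℝ) × (ℝ × ℝ), Complex.exp ((dot2 θ (x.1 - x.2) : ℝ) * Complex.I) ∂(μ.prod μ) := by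
    have : ((‖cf2 μ θ‖^2 : ℝ) : ℂ) = cf2 μ θ * (starRingEnd ℂ) (cf2 μ θ) := by
      rw [Complex.mul_conj, Complex.normSq_eq_norm_sq]
    rw [this]
    unfold cf2
    rw [← integral_conj, ← integral_prod_mul]
    congr 1; ext x
    rw [← Complex.exp_conj, ← Complex.exp_add]
    congr 1
    simp only [dot2, map_mul, Complex.conj_ofReal, Complex.conj_I, Prod.fst_sub, Prod.snd_sub]
    push_cast; ring
  have h2 : ‖cf2 μ θ‖^2 = ((‖cf2 μ θ‖^2 : ℝ) : ℂ).re := by simp only [Complex.ofReal_re]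
  rw [h2, h1]
  have hi : Integrable (fun x : (ℝ × ℝ) × (ℝ × ℝ) => Complex.exp ((dot2 θ (x.1 - x.2) : ℝ) * Complex.I)) (μ.prod μ) := by
    refine Integrable.of_bound (C := 1) (Continuous.aestronglyMeasurable (by fun_prop)) (ae_of_all _ fun p => ?_)
    rw [Complex.norm_exp_ofReal_mul_I]
  have := integral_re hi
  simp only [RCLike.re_to_complex, Complex.exp_ofReal_mul_I_re] at this
  exact this.symm

lemma one_sub_cf2 (μ : Measure (ℝ × ℝ)) [IsProbabilityMeasure μ] (θ : ℝ × ℝ) :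
    1 - ‖cf2 μ θ‖^2 = ∫ x : (ℝ × ℝ) × (ℝ × ℝ), (dot2 θ (x.1 - x.2))^2 * fej (dot2 θ (x.1 - x.2)) / 2 ∂(μ.prod μ) := by
  simp_rw [← one_sub_cos]
  rw [integral_sub (integrable_const _), cf2_norm_sq]
  · simp
  · refine Integrable.of_bound (C := 1) (Continuous.aestronglyMeasurable (by fun_prop)) (ae_of_all _ fun p => ?_)
    exact Real.abs_cos_le_one _

noncomputable def GG (μ : Measure (ℝ × ℝ)) (y : ℝ × (ℝ × ℝ)) : ℝ :=
  ∫ x : (ℝ × ℝ) × (ℝ × ℝ), (dot2 y.2 (x.1 - x.2))^2 * fej (y.1 * dot2 y.2 (x.1 - x.2)) / 2 ∂(μ.prod μ)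

lemma diffsq_integrable (μ : Measure (ℝ × ℝ)) [IsProbabilityMeasure μ] 
    (h1 : Integrable (fun p => p.1^2) μ) (h2 : Integrable (fun p => p.2^2) μ) :
    Integrable (fun x : (ℝ × ℝ) × (ℝ × ℝ) => 2 * (x.1.1^2 + x.2.1^2 + x.1.2^2 + x.2.2^2)) (μ.prod μ) := by
  apply Integrable.const_mul
  exact (((h1.comp_fst μ).add (h1.comp_snd μ)).add (h2.comp_fst μ)).add (h2.comp_snd μ)

lemma dot2_sq_le (u p q : ℝ × ℝ) (hu : u.1^2 + u.2^2 = 1) : 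
    (dot2 u (p - q))^2 ≤ 2 * (p.1^2 + q.1^2 + p.2^2 + q.2^2) := by
  unfold dot2
  simp only [Prod.fst_sub, Prod.snd_sub]
  set a := p.1 - q.1
  set b := p.2 - q.2
  have h1 : (u.1 * a + u.2 * b)^2 ≤ a^2 + b^2 := by
    have : (u.1 * a + u.2 * b)^2 + (u.1 * b - u.2 * a)^2 = a^2 + b^2 := by
      have : (u.1 * a + u.2 * b)^2 + (u.1 * b - u.2 * a)^2 = (u.1^2 + u.2^2) * (a^2 + b^2) := by ring
      rw [this, hu]; ring
    nlinarith [sq_nonneg (u.1 * b - u.2 * a)]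
  have h2 : a^2 + b^2 ≤ 2 * (p.1^2 + q.1^2 + p.2^2 + q.2^2) := by
    simp only [a, b]
    nlinarith [sq_nonneg (p.1 + q.1), sq_nonneg (p.2 + q.2)]
  linarith

lemma GG_bound (y : ℝ × (ℝ × ℝ)) (x : (ℝ × ℝ) × (ℝ × ℝ)) (hu : y.2.1^2 + y.2.2^2 = 1) :
    ‖(dot2 y.2 (x.1 - x.2))^2 * fej (y.1 * dot2 y.2 (x.1 - x.2)) / 2‖ ≤ 
      5 * (2 * (x.1.1^2 + x.2.1^2 + x.1.2^2 + x.2.2^2)) := by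
  have h0 := fej_nonneg (y.1 * dot2 y.2 (x.1 - x.2))
  have h5 := fej_le5 (y.1 * dot2 y.2 (x.1 - x.2))
  have := dot2_sq_le y.2 x.1 x.2 hu
  rw [Real.norm_of_nonneg (by positivity)]
  have : (dot2 y.2 (x.1 - x.2))^2 * fej (y.1 * dot2 y.2 (x.1 - x.2)) ≤ (2 * (x.1.1^2 + x.2.1^2 + x.1.2^2 + x.2.2^2)) * 5 := by
    gcongr
  nlinarith [sq_nonneg x.1.1, sq_nonneg x.1.2, sq_nonneg x.2.1, sq_nonneg x.2.2]

lemma GG_contOn (μ : Measure (ℝ × ℝ)) [IsProbabilityMeasure μ] 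
    (h1 : Integrable (fun p => p.1^2) μ) (h2 : Integrable (fun p => p.2^2) μ) :
    ContinuousOn (GG μ) {y | y.2.1^2 + y.2.2^2 = 1} := by
  unfold GG
  have hf := fej_cont
  apply continuousOn_of_dominated (bound := fun x => 5 * (2 * (x.1.1^2 + x.2.1^2 + x.1.2^2 + x.2.2^2)))
  · intro y _
    exact Continuous.aestronglyMeasurable (by fun_prop)
  · intro y hy
    exact ae_of_all _ fun x => GG_bound y x hy
  · exact (diffsq_integrable μ h1 h2).const_mul 5
  · exact ae_of_all _ fun x => Continuous.continuousOn (by fun_prop)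

lemma GG_eq (μ : Measure (ℝ × ℝ)) [IsProbabilityMeasure μ] (ρ : ℝ) (u : ℝ × ℝ) :
    1 - ‖cf2 μ (ρ • u)‖^2 = ρ^2 * GG μ (ρ, u) := by
  rw [one_sub_cf2, GG, ← integral_const_mul]
  congr 1; ext x
  have : dot2 (ρ • u) (x.1 - x.2) = ρ * dot2 u (x.1 - x.2) := by
    simp [dot2]; ring
  rw [this]; ring

lemma GG_pos (μ : Measure (ℝ × ℝ)) [IsProbabilityMeasure μ] 
    (h1 : Integrable (fun p => p.1^2) μ) (h2 : Integrable (fun p => p.2^2) μ)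
    (hND : ∀ θ : ℝ × ℝ, θ ≠ 0 → ‖cf2 μ θ‖ < 1) (y : ℝ × (ℝ × ℝ)) (hu : y.2.1^2 + y.2.2^2 = 1) :
    0 < GG μ y := by
  obtain ⟨ρ, u⟩ := y
  simp only at hu
  have hu0 : u ≠ 0 := by
    rintro rfl; simp at hu
  have hf := fej_cont
  by_cases hρ : ρ = 0
  · subst hρ
    have hnn : ∀ x : (ℝ × ℝ) × (ℝ × ℝ), 0 ≤ (dot2 u (x.1 - x.2))^2 * fej (0 * dot2 u (x.1 - x.2)) / 2 := by
      intro x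
      have := fej_nonneg (0 * dot2 u (x.1 - x.2))
      positivity
    refine lt_of_le_of_ne (integral_nonneg hnn) ?_
    intro h
    have hIntg : Integrable (fun x : (ℝ × ℝ) × (ℝ × ℝ) => (dot2 u (x.1 - x.2))^2 * fej (0 * dot2 u (x.1 - x.2)) / 2) (μ.prod μ) := by
      refine Integrable.mono' ((diffsq_integrable μ h1 h2).const_mul 5) (Continuous.aestronglyMeasurable (by fun_prop)) ?_
      exact ae_of_all _ fun x => GG_bound (0, u) x hu
    have h0 := (integral_eq_zero_iff_of_nonneg hnn hIntg).1 h.symm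
    have : 1 - ‖cf2 μ u‖^2 = 0 := by
      rw [one_sub_cf2, ← integral_zero ((ℝ × ℝ) × (ℝ × ℝ)) ℝ (μ := μ.prod μ)]
      apply integral_congr_ae
      filter_upwards [h0] with x hx
      simp [fej] at hx
      simp [hx]
    have h3 := hND u hu0
    nlinarith [norm_nonneg (cf2 μ u)]
  · have h3 := hND (ρ • u) (smul_ne_zero hρ hu0)
    have h4 := GG_eq μ ρ u
    have h5 : 0 < 1 - ‖cf2 μ (ρ • u)‖^2 := by nlinarith [norm_nonneg (cf2 μ (ρ • u))]
    rw [h4] at h5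
    exact pos_of_mul_pos_right h5 (sq_nonneg _)

lemma cf2_bound (μ : Measure (ℝ × ℝ)) [IsProbabilityMeasure μ] 
    (h1 : Integrable (fun p => p.1^2) μ) (h2 : Integrable (fun p => p.2^2) μ)
    (hND : ∀ θ : ℝ × ℝ, θ ≠ 0 → ‖cf2 μ θ‖ < 1) (T : ℝ) :
    ∃ c > 0, ∀ θ : ℝ × ℝ, |θ.1| ≤ T → |θ.2| ≤ T → ‖cf2 μ θ‖ ≤ Real.exp (-(c * (θ.1^2 + θ.2^2))) := by
  let K : Set (ℝ × (ℝ × ℝ)) := Icc 0 (2 * T) ×ˢ {u : ℝ × ℝ | u.1^2 + u.2^2 = 1}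
  have hK : IsCompact K := by
    apply isCompact_Icc.prod
    apply Metric.isCompact_of_isClosed_isBounded
    · exact isClosed_eq (by fun_prop) (by fun_prop)
    · apply (Metric.isBounded_closedBall (x := (0 : ℝ × ℝ)) (r := 1)).subset
      intro u hu
      simp only [mem_ofPred_eq] at hu
      simp only [mem_closedBall_zero_iff, Prod.norm_def, Real.norm_eq_abs]
      apply max_le <;> (rw [← sq_le_one_iff_abs_le_one]; nlinarith [sq_nonneg u.1, sq_nonneg u.2])
  obtain ⟨c, hc, hcK⟩ := hK.exists_forall_le' (f := GG μ) (a := 0) 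
    ((GG_contOn μ h1 h2).mono fun y hy => hy.2) (fun y hy => GG_pos μ h1 h2 hND y hy.2)
  refine ⟨c / 2, by positivity, fun θ ht1 ht2 => ?_⟩
  by_cases h0 : θ = 0
  · subst h0
    simp [cf2, dot2]
  set ρ := Real.sqrt (θ.1^2 + θ.2^2) with hρ
  have hsq : ρ^2 = θ.1^2 + θ.2^2 := Real.sq_sqrt (by positivity)
  have hpos : 0 < ρ := by
    apply Real.sqrt_pos.2
    by_contra hcon
    apply h0
    have a1 : θ.1 = 0 := by nlinarith [sq_nonneg θ.1, sq_nonneg θ.2]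
    have a2 : θ.2 = 0 := by nlinarith [sq_nonneg θ.1, sq_nonneg θ.2]
    ext <;> simp [a1, a2]
  have hT : 0 ≤ T := (abs_nonneg _).trans ht1
  have hle : ρ ≤ 2 * T := by
    apply Real.sqrt_le_iff.2 ⟨by linarith, ?_⟩
    have b1 := sq_le_sq' (abs_le.1 ht1).1 (abs_le.1 ht1).2
    have b2 := sq_le_sq' (abs_le.1 ht2).1 (abs_le.1 ht2).2
    nlinarith
  have hmem : ((ρ, ρ⁻¹ • θ) : ℝ × (ℝ × ℝ)) ∈ K := by
    refine ⟨⟨hpos.le, hle⟩, ?_⟩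
    simp only [mem_ofPred_eq, Prod.smul_fst, Prod.smul_snd, smul_eq_mul]
    rw [mul_pow, mul_pow, ← mul_add, ← hsq]; field_simp
  have h3 := hcK _ hmem
  have h4 := GG_eq μ ρ (ρ⁻¹ • θ)
  rw [smul_smul, mul_inv_cancel₀ hpos.ne', one_smul] at h4
  have h5 : ‖cf2 μ θ‖^2 ≤ Real.exp (-(c * ρ^2)) := by
    have := Real.add_one_le_exp (-(c * ρ^2))
    nlinarith [mul_le_mul_of_nonneg_left h3 (sq_nonneg ρ)]
  have h6 : Real.exp (-(c * ρ^2)) = (Real.exp (-(c / 2 * (θ.1^2 + θ.2^2))))^2 := by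
    rw [← Real.exp_nat_mul, hsq]; congr 1; push_cast; ring
  rw [h6] at h5
  exact (pow_le_pow_iff_left₀ (norm_nonneg _) (Real.exp_pos _).le two_ne_zero).1 h5

/-- centred characteristic function -/
noncomputable def cft (μ : Measure (ℝ × ℝ)) (m θ : ℝ × ℝ) : ℂ := ∫ p, Complex.exp ((dot2 θ (p - m) : ℝ) * Complex.I) ∂μ

lemma cft_eq (μ : Measure (ℝ × ℝ)) (m θ : ℝ × ℝ) : 
    cft μ m θ = Complex.exp ((-(dot2 θ m) : ℝ) * Complex.I) * cf2 μ θ := by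
  unfold cft cf2
  rw [← integral_const_mul]
  congr 1; ext p
  rw [← Complex.exp_add]; congr 1
  simp only [dot2, Prod.fst_sub, Prod.snd_sub]; push_cast; ring

lemma cft_norm (μ : Measure (ℝ × ℝ)) (m θ : ℝ × ℝ) : ‖cft μ m θ‖ = ‖cf2 μ θ‖ := by
  rw [cft_eq, norm_mul, Complex.norm_exp_ofReal_mul_I, one_mul]

noncomputable def QQ (μ : Measure (ℝ × ℝ)) (m τ : ℝ × ℝ) : ℝ := ∫ p, (dot2 τ (p - m))^2 ∂μ

lemma integrable_of_sq (μ : Measure (ℝ × ℝ)) [IsProbabilityMeasure μ] (f : ℝ × ℝ → ℝ) (hf : Continuous f)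
    (h1 : Integrable (fun p => (f p)^2) μ) : Integrable f μ := by
  refine ((integrable_const 1).add h1).mono' hf.aestronglyMeasurable (ae_of_all _ fun p => ?_)
  rw [Real.norm_eq_abs]
  simp only [Pi.add_apply]
  apply abs_le.2
  constructor <;> nlinarith [sq_nonneg (f p - 1), sq_nonneg (f p + 1)]

lemma dot_sq_integrable (μ : Measure (ℝ × ℝ)) [IsProbabilityMeasure μ] 
    (h1 : Integrable (fun p => p.1^2) μ) (h2 : Integrable (fun p => p.2^2) μ) (m τ : ℝ × ℝ) :
    Integrable (fun p => (dot2 τ (p - m))^2) μ := by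
  refine Integrable.mono' (((h1.const_mul (3 * τ.1^2)).add (h2.const_mul (3 * τ.2^2))).add (integrable_const (3 * (dot2 τ m)^2)))
    (Continuous.aestronglyMeasurable (by fun_prop)) (ae_of_all _ fun p => ?_)
  rw [Real.norm_of_nonneg (sq_nonneg _)]
  simp only [Pi.add_apply, dot2, Prod.fst_sub, Prod.snd_sub]
  nlinarith [sq_nonneg (τ.1 * p.1 - τ.2 * p.2), sq_nonneg (τ.1 * p.1 + (τ.1 * m.1 + τ.2 * m.2)), sq_nonneg (τ.2 * p.2 + (τ.1 * m.1 + τ.2 * m.2))]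

lemma QQ_pos (μ : Measure (ℝ × ℝ)) [IsProbabilityMeasure μ] 
    (h1 : Integrable (fun p => p.1^2) μ) (h2 : Integrable (fun p => p.2^2) μ)
    (hND : ∀ θ : ℝ × ℝ, θ ≠ 0 → ‖cf2 μ θ‖ < 1) (m τ : ℝ × ℝ) (hτ : τ ≠ 0) : 0 < QQ μ m τ := by
  refine lt_of_le_of_ne (integral_nonneg fun p => sq_nonneg _) fun h => ?_
  have h0 := (integral_eq_zero_iff_of_nonneg (fun p => sq_nonneg _) (dot_sq_integrable μ h1 h2 m τ)).1 h.symm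
  have h3 : cft μ m τ = 1 := by
    have : cft μ m τ = ∫ p, (1:ℂ) ∂μ := by
      apply integral_congr_ae
      filter_upwards [h0] with p hp
      have : dot2 τ (p - m) = 0 := by simpa using hp
      simp [this]
    rw [this]; simp
  have := hND τ hτ
  rw [← cft_norm μ m, h3] at this
  simp at this

lemma cft_clt (μ : Measure (ℝ × ℝ)) [IsProbabilityMeasure μ] 
    (h1 : Integrable (fun p => p.1^2) μ) (h2 : Integrable (fun p => p.2^2) μ)
    (hND : ∀ θ : ℝ × ℝ, θ ≠ 0 → ‖cf2 μ θ‖ < 1) (m τ : ℝ × ℝ) 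
    (hm1 : ∫ p, p.1 ∂μ = m.1) (hm2 : ∫ p, p.2 ∂μ = m.2) :
    Tendsto (fun n : ℕ => (cft μ m ((Real.sqrt n)⁻¹ • τ))^n) atTop (nhds (Complex.exp (-(QQ μ m τ : ℝ) / 2))) := by
  by_cases hτ : τ = 0
  · subst hτ
    simp [cft, dot2, QQ]
  have hQ := QQ_pos μ h1 h2 hND m τ hτ
  set σ := Real.sqrt (QQ μ m τ) with hσ
  have hσp : 0 < σ := Real.sqrt_pos.2 hQ
  have hσ2 : σ^2 = QQ μ m τ := Real.sq_sqrt hQ.le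
  have i1 := integrable_of_sq μ (fun p => p.1) continuous_fst h1
  have i2 := integrable_of_sq μ (fun p => p.2) continuous_snd h2
  have key := ProbabilityTheory.tendsto_charFun_inv_sqrt_mul_pow (P := μ) (X := fun p => σ⁻¹ * dot2 τ (p - m))
    (Continuous.aemeasurable (by fun_prop)) ?_ ?_ σ
  · convert key using 2 with n
    · congr 1
      rw [charFun_apply_real, integral_map (Continuous.aemeasurable (by fun_prop)) (Continuous.aestronglyMeasurable (by fun_prop))]
      unfold cft
      congr 1; ext p
      congr 2
      simp only [dot2, Prod.smul_fst, Prod.smul_snd, smul_eq_mul]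
      push_cast
      have : (σ : ℂ) ≠ 0 := by exact_mod_cast hσp.ne'
      field_simp
    · rw [← hσ2]; push_cast; ring_nf
  · rw [integral_const_mul]
    simp only [dot2, Prod.fst_sub, Prod.snd_sub]
    have j1 : Integrable (fun a : ℝ × ℝ => τ.1 * (a.1 - m.1)) μ := (i1.sub (integrable_const _)).const_mul _
    have j2 : Integrable (fun a : ℝ × ℝ => τ.2 * (a.2 - m.2)) μ := (i2.sub (integrable_const _)).const_mul _
    rw [integral_add j1 j2]
    rw [integral_const_mul, integral_const_mul, integral_sub i1 (integrable_const _), integral_sub i2 (integrable_const _), hm1, hm2]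
    simp
  · simp only [Pi.pow_apply, mul_pow]
    rw [integral_const_mul]
    change (σ⁻¹)^2 * QQ μ m τ = 1
    rw [← hσ2]; field_simp

lemma mconv_eq (μ ν : Measure (ℝ × ℝ)) : mconv μ ν = Measure.conv μ ν := rfl

instance iterConv_prob (μ : Measure (ℝ × ℝ)) [IsProbabilityMeasure μ] (n : ℕ) : IsProbabilityMeasure (iterConv μ n) := by
  induction n with
  | zero => unfold iterConv; infer_instance
  | succ n ih => unfold iterConv; rw [mconv_eq]; infer_instance

lemma iterConv_add (μ : Measure (ℝ × ℝ)) [IsProbabilityMeasure μ] (a b : ℕ) :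
    iterConv μ (a + b) = Measure.conv (iterConv μ a) (iterConv μ b) := by
  induction b with
  | zero => simp [iterConv]
  | succ b ih =>
    rw [← add_assoc]
    change mconv (iterConv μ (a + b)) μ = Measure.conv (iterConv μ a) (mconv (iterConv μ b) μ)
    rw [mconv_eq, mconv_eq, ih, Measure.conv_assoc]

lemma integral_mconv {E : Type*} [NormedAddCommGroup E] [NormedSpace ℝ E] (μ ν : Measure (ℝ × ℝ)) 
    [IsFiniteMeasure μ] [IsFiniteMeasure ν] (f : ℝ × ℝ → E)
    (hf : Continuous f) :
    ∫ p, f p ∂(Measure.conv μ ν) = ∫ x, f (x.1 + x.2) ∂(μ.prod ν) := by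
  unfold Measure.conv
  rw [integral_map (by fun_prop) hf.aestronglyMeasurable]

lemma cf2_mconv (μ ν : Measure (ℝ × ℝ)) [IsProbabilityMeasure μ] [IsProbabilityMeasure ν] (θ : ℝ × ℝ) :
    cf2 (Measure.conv μ ν) θ = cf2 μ θ * cf2 ν θ := by
  unfold cf2
  rw [integral_mconv _ _ _ (by fun_prop), ← integral_prod_mul]
  congr 1; ext x
  rw [← Complex.exp_add]; congr 1
  simp only [dot2, Prod.fst_add, Prod.snd_add]; push_cast; ring

lemma cf2_iterConv (μ : Measure (ℝ × ℝ)) [IsProbabilityMeasure μ] (θ : ℝ × ℝ) (n : ℕ) :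
    cf2 (iterConv μ n) θ = cf2 μ θ ^ n := by
  induction n with
  | zero => simp [iterConv, cf2, dot2]
  | succ n ih =>
    rw [pow_succ, ← ih, ← cf2_mconv]; rfl

lemma iterConv_moments (μ : Measure (ℝ × ℝ)) [IsProbabilityMeasure μ] 
    (h1 : Integrable (fun p => p.1^2) μ) (n : ℕ) :
    Integrable (fun p => p.1^2) (iterConv μ n) ∧ ∫ p, p.1 ∂(iterConv μ n) = n * ∫ p, p.1 ∂μ ∧
    ∫ p, (p.1 - n * ∫ q, q.1 ∂μ)^2 ∂(iterConv μ n) = n * ∫ p, (p.1 - ∫ q, q.1 ∂μ)^2 ∂μ := by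
  set m := ∫ q, q.1 ∂μ with hm
  have i1 := integrable_of_sq μ (fun p => p.1) continuous_fst h1
  induction n with
  | zero => 
    refine ⟨?_, ?_, ?_⟩
    · exact integrable_dirac (by simp)
    · simp [iterConv]
    · simp [iterConv]
  | succ n ih => 
    obtain ⟨a1, a2, a3⟩ := ih
    have a0 := integrable_of_sq (iterConv μ n) (fun p => p.1) continuous_fst a1
    change Integrable (fun p => p.1^2) (Measure.conv (iterConv μ n) μ) ∧ ∫ p, p.1 ∂(Measure.conv (iterConv μ n) μ) = (n+1:ℕ) * m ∧
      ∫ p, (p.1 - (n+1:ℕ) * m)^2 ∂(Measure.conv (iterConv μ n) μ) = (n+1:ℕ) * ∫ p, (p.1 - m)^2 ∂μ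
    refine ⟨?_, ?_, ?_⟩
    · unfold Measure.conv
      rw [integrable_map_measure (Continuous.aestronglyMeasurable (by fun_prop)) (by fun_prop)]
      refine Integrable.mono' (((a1.comp_fst μ).const_mul 2).add ((h1.comp_snd (iterConv μ n)).const_mul 2)) 
        (Continuous.aestronglyMeasurable (by fun_prop)) (ae_of_all _ fun x => ?_)
      simp only [Function.comp, Prod.fst_add, Pi.add_apply]
      rw [Real.norm_of_nonneg (sq_nonneg _)]
      nlinarith [sq_nonneg (x.1.1 - x.2.1)]
    · rw [integral_mconv _ _ _ (by fun_prop)]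
      simp only [Prod.fst_add]
      rw [integral_add (a0.comp_fst μ) (i1.comp_snd (iterConv μ n)), integral_fun_fst (fun p : ℝ × ℝ => p.1), integral_fun_snd (fun p : ℝ × ℝ => p.1), a2]
      simp [← hm]; ring
    · rw [integral_mconv _ _ _ (by fun_prop)]
      simp only [Prod.fst_add]
      have e : ∀ x : (ℝ × ℝ) × (ℝ × ℝ), (x.1.1 + x.2.1 - (n+1:ℕ) * m)^2 = (x.1.1 - n * m)^2 + (x.2.1 - m)^2 + 2 * ((x.1.1 - n * m) * (x.2.1 - m)) := by
        intro x; push_cast; ring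
      simp_rw [e]
      have b0 : Integrable (fun p : ℝ × ℝ => p.1 - n * m) (iterConv μ n) := a0.sub (integrable_const _)
      have c0 : Integrable (fun p : ℝ × ℝ => p.1 - m) μ := i1.sub (integrable_const _)
      have b1 : Integrable (fun p : ℝ × ℝ => (p.1 - n * m)^2) (iterConv μ n) := by
        have : (fun p : ℝ × ℝ => (p.1 - n * m)^2) = fun p : ℝ × ℝ => p.1^2 - 2 * (n * m) * p.1 + (n*m)^2 := by
          ext p; ring
        rw [this]
        exact (a1.sub (a0.const_mul _)).add (integrable_const _)
      have c1 : Integrable (fun p : ℝ × ℝ => (p.1 - m)^2) μ := by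
        have : (fun p : ℝ × ℝ => (p.1 - m)^2) = fun p : ℝ × ℝ => p.1^2 - 2 * m * p.1 + m^2 := by
          ext p; ring
        rw [this]
        exact (h1.sub (i1.const_mul _)).add (integrable_const _)
      have d : Integrable (fun x : (ℝ × ℝ) × (ℝ × ℝ) => 2 * ((x.1.1 - n * m) * (x.2.1 - m))) ((iterConv μ n).prod μ) := 
        (b0.mul_prod c0).const_mul 2
      have d1 := b1.comp_fst μ
      have d2 := c1.comp_snd (iterConv μ n)
      rw [integral_add (by exact d1.add d2) d, integral_add d1 d2, integral_fun_fst (fun p : ℝ × ℝ => (p.1 - n * m)^2),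
        integral_fun_snd (fun p : ℝ × ℝ => (p.1 - m)^2), integral_const_mul, integral_prod_mul (fun p : ℝ × ℝ => p.1 - n * m) (fun p : ℝ × ℝ => p.1 - m), a3]
      have : ∫ p : ℝ × ℝ, (p.1 - m) ∂μ = 0 := by
        rw [integral_sub i1 (integrable_const _)]; simp [← hm]
      rw [this]; simp; ring

noncomputable def kk (θ : ℝ × ℝ) : ℂ := kap θ.1 * kap θ.2
noncomputable def hh (z : ℝ × ℝ) : ℝ := HH z.1 * HH z.2

lemma kk_cont : Continuous kk := by
  have := kap_cont
  unfold kk; fun_prop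

@[fun_prop]
lemma hh_cont : Continuous hh := by
  have := HH_cont
  unfold hh; fun_prop

lemma hh_pos (z : ℝ × ℝ) : 0 < hh z := mul_pos (HH_pos _) (HH_pos _)

lemma HH_le' (x : ℝ) : HH x ≤ 115 := by
  refine (HH_le x).trans ?_
  rw [div_le_iff₀ (by positivity)]; nlinarith [sq_nonneg x]

lemma hh_le (z : ℝ × ℝ) : hh z ≤ 115 * 115 := 
  mul_le_mul (HH_le' _) (HH_le' _) (HH_pos _).le (by norm_num)

lemma hh_le_sq (z : ℝ × ℝ) : hh z * z.1^2 ≤ 115 * 115 := by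
  have h1 : HH z.1 * z.1^2 ≤ 115 := by
    have := HH_le z.1
    rw [le_div_iff₀ (by positivity)] at this
    nlinarith [HH_pos z.1]
  have h2 := HH_le' z.2
  unfold hh
  have := HH_pos z.1
  have := HH_pos z.2
  calc HH z.1 * HH z.2 * z.1^2 = (HH z.1 * z.1^2) * HH z.2 := by ring
    _ ≤ 115 * 115 := by gcongr

lemma kk_integrable : Integrable kk := kap_integrable.mul_prod kap_integrable

lemma kk_norm_le (θ : ℝ × ℝ) : ‖kk θ‖ ≤ 4 := by
  unfold kk
  rw [norm_mul]
  calc _ ≤ (2:ℝ) * 2 := mul_le_mul (kap_norm_le _) (kap_norm_le _) (norm_nonneg _) (by norm_num)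
    _ = 4 := by norm_num

lemma hh_eq (z : ℝ × ℝ) : ((hh z : ℝ) : ℂ) = ∫ θ : ℝ × ℝ, kk θ * Complex.exp ((dot2 θ z : ℝ) * Complex.I) := by
  unfold hh
  rw [Complex.ofReal_mul, HH_eq, HH_eq, ← integral_prod_mul]
  congr 1; ext θ
  unfold kk dot2
  push_cast
  rw [add_mul, Complex.exp_add]; ring

lemma hh_exp_eq (θ₀ z : ℝ × ℝ) : ((hh z : ℝ) : ℂ) * Complex.exp ((dot2 θ₀ z : ℝ) * Complex.I) = 
    ∫ θ : ℝ × ℝ, kk (θ - θ₀) * Complex.exp ((dot2 θ z : ℝ) * Complex.I) := by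
  rw [hh_eq, ← integral_mul_const, ← integral_sub_right_eq_self _ θ₀]
  congr 1; ext θ
  rw [mul_assoc, ← Complex.exp_add]; congr 2
  simp only [dot2, Prod.fst_sub, Prod.snd_sub]; push_cast; ring

lemma hh_four (θ₀ : ℝ × ℝ) : ∫ z : ℝ × ℝ, ((hh z : ℝ) : ℂ) * Complex.exp ((dot2 θ₀ z : ℝ) * Complex.I) = 
    (2 * Real.pi)^2 * kk (-θ₀) := by
  have : (2 * Real.pi : ℂ)^2 * kk (-θ₀) = (2 * Real.pi * kap (-θ₀.1)) * (2 * Real.pi * kap (-θ₀.2)) := by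
    unfold kk; simp only [Prod.fst_neg, Prod.snd_neg]; ring
  rw [this, ← HH_four, ← HH_four, ← integral_prod_mul]
  congr 1; ext z
  unfold hh dot2
  push_cast
  rw [add_mul, Complex.exp_add, mul_comm (θ₀.1 : ℂ), mul_comm (θ₀.2 : ℂ)]; ring

lemma hh_integrable : Integrable hh := HH_integrable.mul_prod HH_integrable

lemma fourier_rep (ν : Measure (ℝ × ℝ)) [IsProbabilityMeasure ν] (θ₀ z : ℝ × ℝ) :
    ∫ p, ((hh (z - p) : ℝ) : ℂ) * Complex.exp ((dot2 θ₀ (z - p) : ℝ) * Complex.I) ∂ν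
     = ∫ θ : ℝ × ℝ, kk (θ - θ₀) * Complex.exp ((dot2 θ z : ℝ) * Complex.I) * cf2 ν (-θ) := by
  simp_rw [hh_exp_eq]
  have hk := kk_cont
  rw [integral_integral_swap]
  · congr 1; ext θ
    unfold cf2
    rw [← integral_const_mul]
    congr 1; ext p
    rw [mul_assoc, ← Complex.exp_add]; congr 2
    simp only [dot2, Prod.fst_sub, Prod.snd_sub, Prod.fst_neg, Prod.snd_neg]; push_cast; ring
  · have : Integrable (fun x : (ℝ × ℝ) × (ℝ × ℝ) => kk (x.2 - θ₀)) (ν.prod volume) := 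
      (kk_integrable.comp_sub_right θ₀).comp_snd ν
    refine this.mul_bdd (c := 1) (Continuous.aestronglyMeasurable (by fun_prop)) (ae_of_all _ fun θ => ?_)
    rw [Complex.norm_exp_ofReal_mul_I]

lemma gauss2_integrable (c : ℝ) (hc : 0 < c) : Integrable (fun θ : ℝ × ℝ => Real.exp (-(c * (θ.1^2 + θ.2^2)))) := by
  have := (integrable_exp_neg_mul_sq hc).mul_prod (integrable_exp_neg_mul_sq hc)
  refine this.congr (ae_of_all _ fun θ => ?_)
  simp only
  rw [← Real.exp_add]; congr 1; ring

lemma scale_int (G : ℝ × ℝ → ℂ) (n : ℕ) (hn : 1 ≤ n) :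
    n * ∫ θ, G θ = ∫ τ, G ((Real.sqrt n)⁻¹ • τ) := by
  rw [Measure.integral_comp_smul]
  have h2 : Module.finrank ℝ (ℝ × ℝ) = 2 := by simp
  rw [h2, inv_pow, inv_inv, Real.sq_sqrt (by positivity)]
  simp

/-- bound on the integrand after rescaling -/
lemma integrand_bound (μ : Measure (ℝ × ℝ)) (θ₀ : ℝ × ℝ) (T c : ℝ) 
   (hT1 : 1 + |θ₀.1| ≤ T) (hT2 : 1 + |θ₀.2| ≤ T)
   (hc : ∀ θ : ℝ × ℝ, |θ.1| ≤ T → |θ.2| ≤ T → ‖cf2 μ θ‖ ≤ Real.exp (-(c * (θ.1^2 + θ.2^2)))) (n : ℕ) (hn : 1 ≤ n) (τ : ℝ × ℝ) :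
   ‖kk ((Real.sqrt n)⁻¹ • τ - θ₀)‖ * ‖cf2 μ (-((Real.sqrt n)⁻¹ • τ))‖^n ≤ 4 * Real.exp (-(c * (τ.1^2 + τ.2^2))) := by
  set θ := (Real.sqrt n)⁻¹ • τ with hθ
  by_cases h : kk (θ - θ₀) = 0
  · rw [h]; simp; positivity
  have aux : ∀ x y : ℝ, kap (x - y) ≠ 0 → 1 + |y| ≤ T → |x| ≤ T := by
    intro x y hk hy
    have : x - y ∈ Icc (-1:ℝ) 1 := by
      by_contra hcon; exact hk (kap_zero_of _ hcon)
    have h3 := abs_le.2 this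
    have := abs_sub_abs_le_abs_sub x y
    linarith
  have k1 : kap (θ.1 - θ₀.1) ≠ 0 := fun h0 => h (by simp [kk, h0])
  have k2 : kap (θ.2 - θ₀.2) ≠ 0 := fun h0 => h (by simp [kk, h0])
  have := hc (-θ) (by simpa using aux _ _ k1 hT1) (by simpa using aux _ _ k2 hT2)
  have hs : Real.sqrt n ^ 2 = n := Real.sq_sqrt (by positivity)
  have hn0 : (0:ℝ) < n := by exact_mod_cast hn
  have h4 : ‖cf2 μ (-θ)‖^n ≤ Real.exp (-(c * (τ.1^2 + τ.2^2))) := by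
    calc _ ≤ (Real.exp (-(c * ((-θ).1^2 + (-θ).2^2))))^n := pow_le_pow_left₀ (norm_nonneg _) this n
      _ = _ := by
        rw [← Real.exp_nat_mul]; congr 1
        simp only [hθ, Prod.fst_neg, Prod.snd_neg, Prod.smul_fst, Prod.smul_snd, smul_eq_mul, neg_sq, mul_pow, inv_pow, hs]
        field_simp
  exact mul_le_mul (kk_norm_le _) h4 (by positivity) (by norm_num)

lemma B1 (μ : Measure (ℝ × ℝ)) [IsProbabilityMeasure μ] 
    (h1 : Integrable (fun p => p.1^2) μ) (h2 : Integrable (fun p => p.2^2) μ)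
    (hND : ∀ θ : ℝ × ℝ, θ ≠ 0 → ‖cf2 μ θ‖ < 1) :
    ∃ C > 0, ∀ n : ℕ, ∀ z : ℝ × ℝ, n * ∫ p, hh (z - p) ∂(iterConv μ n) ≤ C := by
  obtain ⟨c, hc, hb⟩ := cf2_bound μ h1 h2 hND 1
  refine ⟨∫ τ : ℝ × ℝ, 4 * Real.exp (-(c * (τ.1^2 + τ.2^2))), ?_, fun n z => ?_⟩
  · rw [integral_const_mul]
    refine _root_.mul_pos (by norm_num) ?_
    exact integral_exp_pos (gauss2_integrable c hc)
  · rcases Nat.eq_zero_or_pos n with rfl | hn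
    · simp only [Nat.cast_zero, zero_mul]
      exact integral_nonneg fun τ => by positivity
    have h0 := fourier_rep (iterConv μ n) 0 z
    simp only [cf2_iterConv] at h0
    have e : (fun p : ℝ × ℝ => ((hh (z - p) : ℝ) : ℂ) * Complex.exp ((dot2 0 (z - p) : ℝ) * Complex.I)) = fun p => ((hh (z - p) : ℝ) : ℂ) := by
      ext p; simp [dot2]
    have e2 : ∫ p, ((hh (z - p) : ℝ) : ℂ) ∂(iterConv μ n) = ((∫ p, hh (z - p) ∂(iterConv μ n) : ℝ) : ℂ) := integral_complex_ofReal
    rw [e, e2] at h0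
    have h3 : ((n * ∫ p, hh (z - p) ∂(iterConv μ n) : ℝ) : ℂ) = n * ∫ θ : ℝ × ℝ, kk (θ - 0) * Complex.exp ((dot2 θ z : ℝ) * Complex.I) * cf2 μ (-θ) ^ n := by
      rw [← h0]; push_cast; rfl
    rw [scale_int _ n hn] at h3
    have h4 : n * ∫ p, hh (z - p) ∂(iterConv μ n) = ‖((n * ∫ p, hh (z - p) ∂(iterConv μ n) : ℝ) : ℂ)‖ := by
      rw [Complex.norm_real, Real.norm_of_nonneg]
      exact mul_nonneg (by positivity) (integral_nonneg fun p => (hh_pos _).le)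
    rw [h4, h3]
    apply norm_integral_le_of_norm_le ((gauss2_integrable c hc).const_mul 4)
    refine ae_of_all _ fun τ => ?_
    rw [norm_mul, norm_mul, Complex.norm_exp_ofReal_mul_I, mul_one, norm_pow]
    exact integrand_bound μ 0 1 c (by simp) (by simp) hb n hn τ

lemma QQ_neg (μ : Measure (ℝ × ℝ)) (m τ : ℝ × ℝ) : QQ μ m (-τ) = QQ μ m τ := by
  unfold QQ
  congr 1; ext p
  simp only [dot2, Prod.fst_neg, Prod.snd_neg]; ring

lemma LLT (μ : Measure (ℝ × ℝ)) [IsProbabilityMeasure μ] 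
    (h1 : Integrable (fun p => p.1^2) μ) (h2 : Integrable (fun p => p.2^2) μ)
    (hND : ∀ θ : ℝ × ℝ, θ ≠ 0 → ‖cf2 μ θ‖ < 1) (m : ℝ × ℝ) 
    (hm1 : ∫ p, p.1 ∂μ = m.1) (hm2 : ∫ p, p.2 ∂μ = m.2) (θ₀ : ℝ × ℝ) (N : ℕ → ℕ) (z : ℕ → ℝ × ℝ) (w : ℝ × ℝ)
    (hN : Tendsto N atTop atTop) 
    (hz : Tendsto (fun j => (Real.sqrt (N j))⁻¹ • (z j - (N j : ℝ) • m)) atTop (nhds w)) :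
    Tendsto (fun j => (N j : ℂ) * ∫ p, ((hh (z j - p) : ℝ) : ℂ) * Complex.exp ((dot2 θ₀ (z j - p) : ℝ) * Complex.I) ∂(iterConv μ (N j)))
      atTop (nhds (kk (-θ₀) * ∫ τ : ℝ × ℝ, Complex.exp ((dot2 τ w : ℝ) * Complex.I) * Complex.exp (-(QQ μ m τ : ℝ) / 2))) := by
  set T := 1 + max |θ₀.1| |θ₀.2| with hT
  have hT1 : 1 + |θ₀.1| ≤ T := by simp [hT]
  have hT2 : 1 + |θ₀.2| ≤ T := by simp [hT]
  obtain ⟨c, hc, hb⟩ := cf2_bound μ h1 h2 hND T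
  rw [← integral_const_mul]
  have key : ∀ j, 1 ≤ N j → (N j : ℂ) * ∫ p, ((hh (z j - p) : ℝ) : ℂ) * Complex.exp ((dot2 θ₀ (z j - p) : ℝ) * Complex.I) ∂(iterConv μ (N j)) = ∫ τ : ℝ × ℝ, kk ((Real.sqrt (N j))⁻¹ • τ - θ₀) * Complex.exp ((dot2 ((Real.sqrt (N j))⁻¹ • τ) (z j) : ℝ) * Complex.I) * cf2 μ (-((Real.sqrt (N j))⁻¹ • τ)) ^ (N j) := by
    intro j hj
    rw [fourier_rep, scale_int _ (N j) hj]
    simp only [cf2_iterConv]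
  have hev : ∀ᶠ j in atTop, 1 ≤ N j := hN.eventually (eventually_ge_atTop 1)
  have hkc := kk_cont
  have hcf : Continuous (cf2 μ) := cf2_cont μ
  refine Tendsto.congr' (f₁ := fun j => ∫ τ : ℝ × ℝ, kk ((Real.sqrt (N j))⁻¹ • τ - θ₀) * Complex.exp ((dot2 ((Real.sqrt (N j))⁻¹ • τ) (z j) : ℝ) * Complex.I) * cf2 μ (-((Real.sqrt (N j))⁻¹ • τ)) ^ (N j)) (hev.mono fun j hj => (key j hj).symm) ?_
  refine tendsto_integral_filter_of_dominated_convergence (fun τ => 4 * Real.exp (-(c * (τ.1^2 + τ.2^2)))) 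
    (Eventually.of_forall fun j => Continuous.aestronglyMeasurable (by fun_prop)) (hev.mono fun j hj => ae_of_all _ fun τ => ?_)
    ((gauss2_integrable c hc).const_mul 4) (ae_of_all _ fun τ => ?_)
  · rw [norm_mul, norm_mul, Complex.norm_exp_ofReal_mul_I, mul_one, norm_pow]
    exact integrand_bound μ θ₀ T c hT1 hT2 hb (N j) hj τ
  · have e : ∀ j, 1 ≤ N j → kk ((Real.sqrt (N j))⁻¹ • τ - θ₀) * (Complex.exp ((dot2 τ ((Real.sqrt (N j))⁻¹ • (z j - (N j : ℝ) • m)) : ℝ) * Complex.I) * cft μ m ((Real.sqrt (N j))⁻¹ • (-τ)) ^ (N j)) = 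
       kk ((Real.sqrt (N j))⁻¹ • τ - θ₀) * Complex.exp ((dot2 ((Real.sqrt (N j))⁻¹ • τ) (z j) : ℝ) * Complex.I) * cf2 μ (-((Real.sqrt (N j))⁻¹ • τ)) ^ (N j) := by
      intro j hj
      rw [cft_eq, mul_pow, ← Complex.exp_nat_mul, ← mul_assoc (Complex.exp _), ← Complex.exp_add, smul_neg, mul_assoc]
      congr 4
      simp only [dot2, Prod.fst_sub, Prod.snd_sub, Prod.fst_neg, Prod.snd_neg, Prod.smul_fst, Prod.smul_snd, smul_eq_mul]; push_cast; ring
    refine Tendsto.congr' (hev.mono e) ?_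
    have hs : Tendsto (fun j => (Real.sqrt (N j))⁻¹) atTop (nhds 0) := 
      tendsto_inv_atTop_zero.comp (Real.tendsto_sqrt_atTop.comp (tendsto_natCast_atTop_atTop.comp hN))
    refine Tendsto.mul ?_ (Tendsto.mul ?_ ?_)
    · have : Tendsto (fun j => (Real.sqrt (N j))⁻¹ • τ - θ₀) atTop (nhds ((0:ℝ) • τ - θ₀)) := (hs.smul_const τ).sub_const _
      rw [zero_smul, zero_sub] at this
      exact (kk_cont.tendsto _).comp this
    · have hd : Continuous fun w : ℝ × ℝ => Complex.exp ((dot2 τ w : ℝ) * Complex.I) := by fun_prop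
      exact (hd.tendsto w).comp hz
    · rw [← QQ_neg μ m τ]
      exact (cft_clt μ h1 h2 hND m (-τ) hm1 hm2).comp hN

lemma hh_integrable_shift (ν : Measure (ℝ × ℝ)) [IsFiniteMeasure ν] (z : ℝ × ℝ) : Integrable (fun p => hh (z - p)) ν := by
  have := hh_cont
  refine (integrable_const ((115:ℝ)*115)).mono' (Continuous.aestronglyMeasurable (by fun_prop)) (ae_of_all _ fun p => ?_)
  rw [Real.norm_of_nonneg (hh_pos _).le]; exact hh_le _

lemma dev_integrable (μ : Measure (ℝ × ℝ)) [IsProbabilityMeasure μ] 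
    (h1 : Integrable (fun p => p.1^2) μ) (n : ℕ) (c : ℝ) : Integrable (fun p => (p.1 - c)^2) (iterConv μ n) := by
  have i2 := (iterConv_moments μ h1 n).1
  have i1 := integrable_of_sq (iterConv μ n) (fun p => p.1) continuous_fst i2
  refine ((i2.sub (i1.const_mul (2*c))).add (integrable_const (c^2))).congr (ae_of_all _ fun p => ?_)
  simp only [Pi.add_apply, Pi.sub_apply]; ring

lemma dev_hh_integrable (μ ν : Measure (ℝ × ℝ)) [IsFiniteMeasure μ] [IsFiniteMeasure ν] (g : ℝ × ℝ → ℝ) (hg : Integrable g μ) (z : ℝ × ℝ) :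
    Integrable (fun x : (ℝ × ℝ) × (ℝ × ℝ) => g x.1 * hh (z - (x.1 + x.2))) (μ.prod ν) := by
  have := hh_cont
  refine (hg.comp_fst ν).mul_bdd (c := 115 * 115) (Continuous.aestronglyMeasurable (by fun_prop)) (ae_of_all _ fun x => ?_)
  rw [Real.norm_of_nonneg (hh_pos _).le]; exact hh_le _

lemma dev_hh_le (μ ν : Measure (ℝ × ℝ)) [IsFiniteMeasure μ] [IsFiniteMeasure ν] (g : ℝ × ℝ → ℝ) (hg : Integrable g μ) (hg0 : ∀ p, 0 ≤ g p) (z : ℝ × ℝ) 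
    (K : ℝ) (hK : ∀ z, ∫ p, hh (z - p) ∂ν ≤ K) :
    ∫ x : (ℝ × ℝ) × (ℝ × ℝ), g x.1 * hh (z - (x.1 + x.2)) ∂(μ.prod ν) ≤ (∫ p, g p ∂μ) * K := by
  rw [integral_prod _ (dev_hh_integrable μ ν g hg z), ← integral_mul_const]
  refine integral_mono_of_nonneg (ae_of_all _ fun x => integral_nonneg fun y => mul_nonneg (hg0 _) (hh_pos _).le) (hg.mul_const K) (ae_of_all _ fun x => ?_)
  simp only
  rw [integral_const_mul]
  refine mul_le_mul_of_nonneg_left ?_ (hg0 _)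
  have := hK (z - x)
  simpa only [sub_sub] using this

lemma B2 (μ : Measure (ℝ × ℝ)) [IsProbabilityMeasure μ] 
    (h1 : Integrable (fun p => p.1^2) μ) (h2 : Integrable (fun p => p.2^2) μ)
    (hND : ∀ θ : ℝ × ℝ, θ ≠ 0 → ‖cf2 μ θ‖ < 1) (mS : ℝ) (hm : ∫ p, p.1 ∂μ = mS) :
    ∃ C > 0, ∀ n : ℕ, ∀ z : ℝ × ℝ, (z.1 - n * mS)^2 * ∫ p, hh (z - p) ∂(iterConv μ n) ≤ C := by
  obtain ⟨C1, hC1, hB1⟩ := B1 μ h1 h2 hND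
  set σ := ∫ p, (p.1 - mS)^2 ∂μ with hσ
  have hσ0 : 0 ≤ σ := integral_nonneg fun p => sq_nonneg _
  have hvar : ∀ n : ℕ, ∫ p, (p.1 - n * mS)^2 ∂(iterConv μ n) = n * σ := by
    intro n; have := (iterConv_moments μ h1 n).2.2; rwa [hm] at this
  have hhc := hh_cont
  have hIW : ∀ (n : ℕ) (z : ℝ × ℝ), Integrable (fun p : ℝ × ℝ => (p.1 - n * mS)^2 * hh (z - p)) (iterConv μ n) := by
    intro n z
    refine (dev_integrable μ h1 n (n * mS)).mul_bdd (c := 115 * 115) (Continuous.aestronglyMeasurable (by fun_prop)) (ae_of_all _ fun x => ?_)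
    rw [Real.norm_of_nonneg (hh_pos _).le]; exact hh_le _
  have hW : ∀ n : ℕ, ∀ z : ℝ × ℝ, ∫ p, (p.1 - n * mS)^2 * hh (z - p) ∂(iterConv μ n) ≤ 6 * σ * C1 + 115 * 115 * σ := by
    intro n z
    rcases Nat.lt_or_ge n 2 with hn | hn
    · have hle : ∫ p, (p.1 - n * mS)^2 * hh (z - p) ∂(iterConv μ n) ≤ n * σ * (115*115) := by
        rw [← hvar n, ← integral_mul_const]
        refine integral_mono (hIW n z) ((dev_integrable μ h1 n (n * mS)).mul_const _) fun p => ?_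
        exact mul_le_mul_of_nonneg_left (hh_le _) (sq_nonneg _)
      have hn1 : (n : ℝ) ≤ 1 := by exact_mod_cast Nat.lt_succ_iff.1 hn
      have : (n:ℝ) * σ ≤ σ := by nlinarith
      have h6 : 0 ≤ 6 * σ * C1 := by positivity
      nlinarith
    · obtain ⟨a, b, hab, ha, hb, hab1, hba⟩ : ∃ a b : ℕ, n = a + b ∧ 1 ≤ a ∧ 1 ≤ b ∧ a ≤ b ∧ b ≤ 2 * a := 
        ⟨n/2, n - n/2, by omega, by omega, by omega, by omega, by omega⟩
      have haR : (1:ℝ) ≤ a := by exact_mod_cast ha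
      have hbR : (1:ℝ) ≤ b := by exact_mod_cast hb
      have hab1R : (a:ℝ) ≤ b := by exact_mod_cast hab1
      have hbaR : (b:ℝ) ≤ 2 * a := by exact_mod_cast hba
      have hKa : ∀ z, ∫ p, hh (z - p) ∂(iterConv μ a) ≤ C1 / a := fun z => by
        rw [le_div_iff₀ (by linarith), mul_comm]; exact hB1 a z
      have hKb : ∀ z, ∫ p, hh (z - p) ∂(iterConv μ b) ≤ C1 / b := fun z => by
        rw [le_div_iff₀ (by linarith), mul_comm]; exact hB1 b z
      have L1 := dev_hh_le (iterConv μ a) (iterConv μ b) _ (dev_integrable μ h1 a (a * mS)) (fun p => sq_nonneg _) z _ hKb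
      have L2 := dev_hh_le (iterConv μ b) (iterConv μ a) _ (dev_integrable μ h1 b (b * mS)) (fun p => sq_nonneg _) z _ hKa
      rw [← integral_prod_swap] at L2
      rw [hvar] at L1 L2
      have I1 := dev_hh_integrable (iterConv μ a) (iterConv μ b) _ (dev_integrable μ h1 a (a * mS)) z
      have I2 := (dev_hh_integrable (iterConv μ b) (iterConv μ a) _ (dev_integrable μ h1 b (b * mS)) z).swap
      simp only [Prod.fst_swap, Prod.snd_swap, Function.comp_def] at L2 I2
      have E : ∫ p, (p.1 - n * mS)^2 * hh (z - p) ∂(iterConv μ n) = ∫ x : (ℝ × ℝ) × (ℝ × ℝ), ((x.1 + x.2).1 - n * mS)^2 * hh (z - (x.1 + x.2)) ∂((iterConv μ a).prod (iterConv μ b)) := by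
        conv_lhs => rw [hab, iterConv_add]
        rw [integral_mconv _ _ _ (by fun_prop), ← hab]
      have j1 : Integrable (fun x : (ℝ × ℝ) × (ℝ × ℝ) => 2 * ((x.1.1 - a * mS)^2 * hh (z - (x.1 + x.2)))) ((iterConv μ a).prod (iterConv μ b)) := I1.const_mul 2
      have j2 : Integrable (fun x : (ℝ × ℝ) × (ℝ × ℝ) => 2 * ((x.2.1 - b * mS)^2 * hh (z - (x.2 + x.1)))) ((iterConv μ a).prod (iterConv μ b)) := I2.const_mul 2
      have hle : ∫ p, (p.1 - n * mS)^2 * hh (z - p) ∂(iterConv μ n) ≤ 2 * (a * σ * (C1 / b)) + 2 * (b * σ * (C1 / a)) := by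
        rw [E]
        calc _ ≤ ∫ x : (ℝ × ℝ) × (ℝ × ℝ), (2 * ((x.1.1 - a * mS)^2 * hh (z - (x.1 + x.2))) + 2 * ((x.2.1 - b * mS)^2 * hh (z - (x.2 + x.1)))) ∂((iterConv μ a).prod (iterConv μ b)) := by
              refine integral_mono_of_nonneg (ae_of_all _ fun x => mul_nonneg (sq_nonneg _) (hh_pos _).le) (j1.add j2) (ae_of_all _ fun x => ?_)
              simp only
              rw [add_comm x.2 x.1, ← mul_assoc, ← mul_assoc, ← add_mul]
              refine mul_le_mul_of_nonneg_right ?_ (hh_pos _).le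
              rw [hab]; push_cast
              simp only [Prod.fst_add]
              nlinarith [sq_nonneg ((x.1.1 - a * mS) - (x.2.1 - b * mS))]
          _ = _ := by rw [integral_add j1 j2, integral_const_mul, integral_const_mul]
          _ ≤ _ := by linarith
      have e1 : a * σ * (C1 / b) ≤ σ * C1 := by
        rw [show a * σ * (C1 / b) = (σ * C1) * (a / b) by ring]
        exact mul_le_of_le_one_right (by positivity) ((div_le_one (by linarith)).2 hab1R)
      have e2 : b * σ * (C1 / a) ≤ 2 * (σ * C1) := by
        rw [show b * σ * (C1 / a) = (σ * C1) * (b / a) by ring, mul_comm 2]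
        exact mul_le_mul_of_nonneg_left ((div_le_iff₀ (by linarith)).2 hbaR) (by positivity)
      have : 0 ≤ 115 * 115 * σ := by positivity
      linarith
  refine ⟨2 * (115 * 115) + 2 * (6 * σ * C1 + 115 * 115 * σ), by positivity, fun n z => ?_⟩
  rw [← integral_const_mul]
  have j2 : Integrable (fun p : ℝ × ℝ => 2 * ((p.1 - n * mS)^2 * hh (z - p))) (iterConv μ n) := (hIW n z).const_mul 2
  have j1 : Integrable (fun p : ℝ × ℝ => (2 * (115 * 115) : ℝ)) (iterConv μ n) := integrable_const _
  calc _ ≤ ∫ p : ℝ × ℝ, (2 * (115 * 115) + 2 * ((p.1 - n * mS)^2 * hh (z - p))) ∂(iterConv μ n) := by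
        refine integral_mono ((hh_integrable_shift _ z).const_mul _) (j1.add j2) fun p => ?_
        have := hh_le_sq (z - p)
        simp only [Prod.fst_sub] at this ⊢
        have h0 := hh_pos (z - p)
        have : (z.1 - n * mS)^2 ≤ 2 * (z.1 - p.1)^2 + 2 * (p.1 - n * mS)^2 := by nlinarith [sq_nonneg ((z.1 - p.1) - (p.1 - n * mS))]
        nlinarith [mul_le_mul_of_nonneg_right this h0.le]
    _ = 2 * (115 * 115) + 2 * ∫ p, (p.1 - n * mS)^2 * hh (z - p) ∂(iterConv μ n) := by
        rw [integral_add j1 j2, integral_const, integral_const_mul]; simp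
    _ ≤ _ := by linarith [hW n z]

lemma quad_lower (A B D : ℝ) (hD : 0 < D) (hA : 0 < A) (hΔ : 0 < A * D - B^2) (x y : ℝ) :
    (A * D - B^2) / (A + D) * (x^2 + y^2) ≤ A * x^2 + 2 * B * x * y + D * y^2 := by
  set c := (A * D - B^2) / (A + D) with hc
  have hc0 : 0 < c := by positivity
  have hcc : c * (A + D) = A * D - B^2 := by rw [hc]; field_simp
  have hAc : 0 < A - c := by
    have : c * (A + D) < A * (A + D) := by nlinarith [sq_nonneg B, sq_pos_of_pos hA]
    have := lt_of_mul_lt_mul_right this (by positivity)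
    linarith
  have : 0 ≤ (A - c) * (A * x^2 + 2 * B * x * y + D * y^2 - c * (x^2+y^2)) := by
    have : (A - c) * (A * x^2 + 2 * B * x * y + D * y^2 - c * (x^2+y^2)) = ((A-c)*x + B*y)^2 + c^2 * y^2 + (A * D - B^2 - c * (A + D)) * y^2 := by ring
    rw [this, hcc]; simp; positivity
  have := nonneg_of_mul_nonneg_right this hAc
  linarith

lemma cpow_half (x : ℝ) (hx : 0 ≤ x) : ((x : ℂ)) ^ (1/2 : ℂ) = ((Real.sqrt x : ℝ) : ℂ) := by
  rw [Real.sqrt_eq_rpow, Complex.ofReal_cpow hx]; norm_num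

lemma J_eq (A B D m1 m2 : ℝ) (hD : 0 < D) (hA : 0 < A) (hΔ : 0 < A * D - B^2) (t : ℝ) :
    ∫ τ : ℝ × ℝ, Complex.exp ((dot2 τ (-t • (m1, m2)) : ℝ) * Complex.I) * Complex.exp (-((A * τ.1^2 + 2 * B * τ.1 * τ.2 + D * τ.2^2 : ℝ)) / 2)
      = ((Real.sqrt (2 * Real.pi / D) * Real.sqrt (2 * Real.pi * D / (A * D - B^2)) * Real.exp (-((m1^2 * D - 2 * B * m1 * m2 + m2^2 * A) / (2 * (A * D - B^2))) * t^2) : ℝ) : ℂ) := by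
  have hcI : Complex.I ^ 2 = -1 := Complex.I_sq
  have hD' : (D : ℂ) ≠ 0 := by exact_mod_cast hD.ne'
  have hΔ' : ((A * D - B^2 : ℂ)) ≠ 0 := by exact_mod_cast hΔ.ne'
  have hIntg : Integrable (fun τ : ℝ × ℝ => Complex.exp ((dot2 τ (-t • (m1, m2)) : ℝ) * Complex.I) * Complex.exp (-((A * τ.1^2 + 2 * B * τ.1 * τ.2 + D * τ.2^2 : ℝ)) / 2)) := by
    refine (gauss2_integrable (((A * D - B^2) / (A + D))/2) (by positivity)).mono' (Continuous.aestronglyMeasurable (by fun_prop)) (ae_of_all _ fun τ => ?_)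
    rw [norm_mul, Complex.norm_exp_ofReal_mul_I, one_mul, Complex.norm_exp]
    apply Real.exp_le_exp.2
    have := quad_lower A B D hD hA hΔ τ.1 τ.2
    have e : (-((A * τ.1^2 + 2 * B * τ.1 * τ.2 + D * τ.2^2 : ℝ) : ℂ) / 2).re = -(A * τ.1^2 + 2 * B * τ.1 * τ.2 + D * τ.2^2)/2 := by
      rw [← Complex.ofReal_ofNat, ← Complex.ofReal_neg, ← Complex.ofReal_div, Complex.ofReal_re]
    rw [e]; linarith
  rw [Measure.volume_eq_prod, integral_prod _ hIntg]
  have inner : ∀ x : ℝ, ∫ y : ℝ, Complex.exp ((dot2 (x, y) (-t • (m1, m2)) : ℝ) * Complex.I) * Complex.exp (-((A * x^2 + 2 * B * x * y + D * y^2 : ℝ)) / 2) = ((Real.sqrt (2 * Real.pi / D) : ℝ) : ℂ) * Complex.exp ((-((A * D - B^2)/(2 * D) : ℝ) : ℂ) * x^2 + (t * (m2 * B / D - m1) * Complex.I) * x + (-(t^2 * m2^2 / (2 * D)) : ℂ)) := by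
    intro x
    have := integral_cexp_quadratic (b := ((-(D/2) : ℝ) : ℂ)) (by rw [Complex.ofReal_re]; linarith) (-(B * x) - t * m2 * Complex.I) (-(A/2) * x^2 - t * m1 * x * Complex.I)
    convert this using 1
    · congr 1; ext y
      rw [← Complex.exp_add]; congr 1
      simp only [dot2, Prod.smul_fst, Prod.smul_snd, smul_eq_mul]; push_cast; ring
    · congr 1
      · rw [← cpow_half _ (by positivity)]; congr 1
        push_cast; field_simp
      · congr 1
        push_cast
        have : (-(B * x) - t * m2 * Complex.I : ℂ)^2 = B^2 * x^2 + 2 * B * x * t * m2 * Complex.I - t^2*m2^2 := by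
          ring_nf; rw [hcI]; ring
        rw [this]; field_simp; ring
  simp only [inner]
  rw [integral_const_mul, integral_cexp_quadratic]
  · have e1 : ((Real.pi : ℂ) / (- -((((A * D - B^2)/(2 * D) : ℝ)) : ℂ))) = ((2 * Real.pi * D / (A * D - B^2) : ℝ) : ℂ) := by
      push_cast; field_simp
    rw [e1, cpow_half _ (by positivity), ← mul_assoc]
    push_cast
    congr 2
    have : (t * (m2 * B / D - m1) * Complex.I : ℂ)^2 = - (t^2 * (m2 * B / D - m1)^2) := by
      rw [mul_pow, mul_pow, hcI]; ring
    rw [this]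
    obtain ⟨E, hE⟩ : ∃ E : ℂ, E = A * D - B^2 := ⟨_, rfl⟩
    have hAE : (A : ℂ) = (E + B^2) / D := by rw [hE]; field_simp; ring
    rw [← hE] at hΔ' ⊢
    rw [hAE]; field_simp; ring
  · rw [← Complex.ofReal_neg, Complex.ofReal_re]; have : 0 < (A * D - B^2)/(2 * D) := by positivity
    linarith

lemma J_int (A B D W : ℝ) (hD : 0 < D) (hA : 0 < A) (hΔ : 0 < A * D - B^2) (hW : 0 < W) :
    ∫ t : ℝ, (Real.sqrt (2 * Real.pi / D) * Real.sqrt (2 * Real.pi * D / (A * D - B^2)) * Real.exp (-(W / (2 * (A * D - B^2))) * t^2)) = (2 * Real.pi)^2 / Real.sqrt (2 * Real.pi * W) := by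
  rw [integral_const_mul, integral_gaussian, ← Real.sqrt_mul (by positivity), ← Real.sqrt_mul (by positivity)]
  rw [_root_.eq_div_iff (by positivity), ← Real.sqrt_mul (by positivity)]
  rw [show 2 * Real.pi / D * (2 * Real.pi * D / (A * D - B ^ 2)) * (Real.pi / (W / (2 * (A * D - B ^ 2)))) * (2 * Real.pi * W) = ((2 * Real.pi)^2)^2 by
    generalize A * D - B^2 = E at hΔ ⊢
    field_simp]
  rw [Real.sqrt_sq (by positivity)]

lemma map_floor : Measure.map (fun s : ℝ => ⌊s⌋₊) (volume.restrict (Ici 0)) = Measure.count := by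
  refine Measure.ext_of_singleton fun n => ?_
  rw [Measure.map_apply Nat.measurable_floor (measurableSet_singleton n), Measure.restrict_apply (Nat.measurable_floor (measurableSet_singleton n)), Measure.count_singleton]
  have : (fun s : ℝ => ⌊s⌋₊) ⁻¹' {n} ∩ Ici 0 = Ico (n:ℝ) (n+1) := by
    ext s
    simp only [mem_inter_iff, mem_preimage, mem_singleton_iff, mem_Ici, mem_Ico]
    constructor
    · rintro ⟨h, h0⟩; exact (Nat.floor_eq_iff h0).1 h
    · rintro h; have h0 : 0 ≤ s := le_trans (Nat.cast_nonneg n) h.1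
      exact ⟨(Nat.floor_eq_iff h0).2 h, h0⟩
  rw [this, Real.volume_Ico]; simp

lemma floor_sum (a : ℕ → ℂ) (hi : Integrable (fun s : ℝ => (Ici (0:ℝ)).indicator (fun s => a ⌊s⌋₊) s)) :
    Summable (fun n => ‖a n‖) ∧ ∑' n, a n = ∫ s : ℝ, (Ici (0:ℝ)).indicator (fun s => a ⌊s⌋₊) s := by
  rw [integrable_indicator_iff measurableSet_Ici] at hi
  rw [integral_indicator measurableSet_Ici]
  have hi2 : Integrable a Measure.count := by
    rw [← map_floor, integrable_map_measure (by fun_prop) Nat.measurable_floor.aemeasurable]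
    exact hi
  refine ⟨(integrable_count_iff).1 hi2, ?_⟩
  have e : ∫ s in Ici (0:ℝ), a ⌊s⌋₊ = ∫ n, a n ∂Measure.count := by
    rw [← map_floor, integral_map Nat.measurable_floor.aemeasurable (by fun_prop)]
  rw [e, integral_countable hi2]
  simp

lemma subst_int (g : ℝ → ℂ) (X : ℝ) (hX : 0 < X) : ((Real.sqrt X : ℝ) : ℂ) * ∫ s, g s = ∫ t, (X : ℂ) * g (X + Real.sqrt X * t) := by
  have hs : 0 < Real.sqrt X := Real.sqrt_pos.2 hX
  have h1 : ∫ t, g (X + Real.sqrt X * t) = ((Real.sqrt X)⁻¹ : ℝ) • ∫ s, g (X + s) := by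
    rw [Measure.integral_comp_mul_left (fun s => g (X + s)), abs_of_pos (by positivity)]
  rw [integral_const_mul, h1, integral_add_left_eq_self, Complex.real_smul, ← mul_assoc]
  congr 1
  rw [← Complex.ofReal_mul]; congr 1
  nth_rewrite 2 [← Real.mul_self_sqrt hX.le]
  field_simp

lemma dom_bound (X t C1 C2 u : ℝ) (N : ℕ) (hX : 16 ≤ X) (hC1 : 0 < C1) (hC2 : 0 < C2) (hu : 0 ≤ u) (hs : 0 ≤ X + Real.sqrt X * t)
    (hN : N = ⌊X + Real.sqrt X * t⌋₊) (b1 : N * u ≤ C1) (b2 : (X - N)^2 * u ≤ C2) : X * u ≤ (20 * C1 + 8 * C2) * (1 + t^2)⁻¹ := by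
  have f1 : (N:ℝ) ≤ X + Real.sqrt X * t := by rw [hN]; exact Nat.floor_le hs
  have f2 : X + Real.sqrt X * t < N + 1 := by rw [hN]; exact Nat.lt_floor_add_one _
  have hq4 : 4 ≤ Real.sqrt X := by
    rw [show (4:ℝ) = Real.sqrt 16 by rw [show (16:ℝ) = 4^2 by norm_num, Real.sqrt_sq (by norm_num)]]
    exact Real.sqrt_le_sqrt hX
  have hq : Real.sqrt X ^ 2 = X := Real.sq_sqrt (by linarith)
  set q := Real.sqrt X
  rw [← div_eq_mul_inv, le_div_iff₀ (by positivity)]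
  rcases le_or_gt (|t|) 2 with ht | ht
  · have ht' := abs_le.1 ht
    have hNX : X ≤ 4 * N := by nlinarith
    have : X * u ≤ 4 * C1 := by nlinarith
    have t2 : t^2 ≤ 4 := by nlinarith
    nlinarith [sq_nonneg t]
  · have t2 : 4 < t^2 := by rw [← sq_abs]; nlinarith
    have habs : q * |t| / 2 ≤ |X - N| := by
      have e : q * |t| = |q * t| := by rw [abs_mul, abs_of_nonneg (by linarith : 0 ≤ q)]
      have : |q * t| ≤ |X - N| + 1 := by
        have h3 : |q * t| ≤ |(X + q * t - N)| + |X - N| := by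
          rw [show q * t = (X + q * t - N) - (X - N) by ring]
          refine (abs_sub _ _).trans (le_of_eq ?_)
          congr 2; ring
        have h4 : |X + q * t - N| ≤ 1 := by rw [abs_le]; constructor <;> linarith
        linarith
      rw [← e] at this
      nlinarith
    have hsq : X * t^2 / 4 ≤ (X - N)^2 := by
      have h0 : 0 ≤ q * |t| / 2 := by positivity
      have := pow_le_pow_left₀ h0 habs 2
      rw [div_pow, mul_pow, sq_abs, sq_abs, hq] at this
      linarith
    have h5 : X * u * t^2 ≤ 4 * C2 := by
      have := mul_le_mul_of_nonneg_right hsq hu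
      nlinarith
    have h6 : 0 ≤ X * u := mul_nonneg (by linarith) hu
    nlinarith

lemma renewal_abstract (X : ℕ → ℝ) (a : ℕ → ℕ → ℂ) (J : ℝ → ℂ) (hX : Tendsto X atTop atTop) (C1 C2 : ℝ) (hC1 : 0 < C1) (hC2 : 0 < C2)
    (b1 : ∀ k n, n * ‖a k n‖ ≤ C1) (b2 : ∀ k n, (X k - n)^2 * ‖a k n‖ ≤ C2)
    (hlim : ∀ t : ℝ, ∀ N : ℕ → ℕ, Tendsto N atTop atTop → Tendsto (fun k => ((N k : ℝ) - X k) / Real.sqrt (X k)) atTop (nhds t) → 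
      Tendsto (fun k => (N k : ℂ) * a k (N k)) atTop (nhds (J t))) :
    (∀ᶠ k in atTop, Summable (fun n => ‖a k n‖)) ∧ Tendsto (fun k => ((Real.sqrt (X k) : ℝ) : ℂ) * ∑' n, a k n) atTop (nhds (∫ t, J t)) := by
  set g : ℕ → ℝ → ℂ := fun k => (Ici (0:ℝ)).indicator (fun s => a k ⌊s⌋₊) with hg
  have hgm : ∀ k, Measurable (g k) := fun k => Measurable.indicator ((measurable_from_nat (f := a k)).comp Nat.measurable_floor) measurableSet_Ici
  have hev : ∀ᶠ k in atTop, 16 ≤ X k := hX.eventually (eventually_ge_atTop 16)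
  have hbi : Integrable (fun t : ℝ => (20 * C1 + 8 * C2) * (1 + t^2)⁻¹) := integrable_inv_one_add_sq.const_mul _
  have hbd : ∀ k, 16 ≤ X k → ∀ t, ‖(X k : ℂ) * g k (X k + Real.sqrt (X k) * t)‖ ≤ (20 * C1 + 8 * C2) * (1 + t^2)⁻¹ := by
    intro k hk t
    rw [norm_mul, Complex.norm_real, Real.norm_of_nonneg (by linarith)]
    simp only [hg]
    by_cases hs : 0 ≤ X k + Real.sqrt (X k) * t
    · rw [indicator_of_mem (by exact hs)]
      exact dom_bound _ t C1 C2 _ _ hk hC1 hC2 (norm_nonneg _) hs rfl (b1 _ _) (b2 _ _)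
    · rw [indicator_of_notMem (by exact hs)]; simp; positivity
  have hIntg : ∀ k, 16 ≤ X k → Integrable (g k) := by
    intro k hk
    have hs : 0 < Real.sqrt (X k) := Real.sqrt_pos.2 (by linarith)
    have i1 : Integrable (fun t => (X k : ℂ) * g k (X k + Real.sqrt (X k) * t)) := 
      hbi.mono' (Measurable.aestronglyMeasurable (by have := hgm k; fun_prop)) (ae_of_all _ (hbd k hk))
    have i2 : Integrable (fun t => g k (X k + Real.sqrt (X k) * t)) := by
      refine (i1.const_mul ((X k : ℂ)⁻¹)).congr (ae_of_all _ fun t => ?_)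
      simp only
      rw [← mul_assoc, inv_mul_cancel₀, one_mul]
      have : X k ≠ 0 := by linarith
      exact_mod_cast this
    have i3 : Integrable (fun s => g k (X k + s)) := by
      have := i2.comp_mul_left' (inv_ne_zero hs.ne')
      refine this.congr (ae_of_all _ fun t => ?_)
      simp only; congr 2; field_simp
    have := i3.comp_add_left (-(X k))
    refine this.congr (ae_of_all _ fun t => ?_)
    simp
  refine ⟨hev.mono fun k hk => (floor_sum (a k) (hIntg k hk)).1, ?_⟩
  have key : ∀ k, 16 ≤ X k → ∫ t, (X k : ℂ) * g k (X k + Real.sqrt (X k) * t) = ((Real.sqrt (X k) : ℝ) : ℂ) * ∑' n, a k n := by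
    intro k hk
    rw [(floor_sum (a k) (hIntg k hk)).2, ← subst_int _ _ (by linarith)]
  refine Tendsto.congr' (hev.mono key) ?_
  refine tendsto_integral_filter_of_dominated_convergence (fun t : ℝ => (20 * C1 + 8 * C2) * (1 + t^2)⁻¹)
    (Eventually.of_forall fun k => Measurable.aestronglyMeasurable (by have := hgm k; fun_prop)) (hev.mono fun k hk => ae_of_all _ (hbd k hk)) hbi (ae_of_all _ fun t => ?_)
  set N : ℕ → ℕ := fun k => ⌊X k + Real.sqrt (X k) * t⌋₊ with hN
  have hsq : Tendsto (fun k => Real.sqrt (X k)) atTop atTop := Real.tendsto_sqrt_atTop.comp hX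
  have hs1 : Tendsto (fun k => X k + Real.sqrt (X k) * t) atTop atTop := by
    have : Tendsto (fun k => Real.sqrt (X k) * (Real.sqrt (X k) + t)) atTop atTop := hsq.atTop_mul_atTop₀ (tendsto_atTop_add_const_right _ _ hsq)
    refine this.congr' (hev.mono fun k hk => ?_)
    rw [mul_add, Real.mul_self_sqrt (by linarith)]
  have hNt : Tendsto N atTop atTop := tendsto_nat_floor_atTop.comp hs1
  have hpos : ∀ᶠ k in atTop, 0 ≤ X k + Real.sqrt (X k) * t := hs1.eventually (eventually_ge_atTop 0)
  have hinv : Tendsto (fun k => (Real.sqrt (X k))⁻¹) atTop (nhds 0) := tendsto_inv_atTop_zero.comp hsq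
  have hNr : Tendsto (fun k => ((N k : ℝ) - X k) / Real.sqrt (X k)) atTop (nhds t) := by
    have l1 : Tendsto (fun k => t - (Real.sqrt (X k))⁻¹) atTop (nhds t) := by simpa using hinv.const_sub t
    refine tendsto_of_tendsto_of_tendsto_of_le_of_le' l1 tendsto_const_nhds ?_ ?_
    · filter_upwards [hev, hpos] with k hk hp
      have hs : 0 < Real.sqrt (X k) := Real.sqrt_pos.2 (by linarith)
      rw [le_div_iff₀ hs, sub_mul, inv_mul_cancel₀ hs.ne']
      have : X k + Real.sqrt (X k) * t < N k + 1 := Nat.lt_floor_add_one _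
      linarith
    · filter_upwards [hev, hpos] with k hk hp
      have hs : 0 < Real.sqrt (X k) := Real.sqrt_pos.2 (by linarith)
      rw [div_le_iff₀ hs]
      have : (N k : ℝ) ≤ X k + Real.sqrt (X k) * t := Nat.floor_le hp
      linarith
  have hL := hlim t N hNt hNr
  have hratio : Tendsto (fun k => X k / N k) atTop (nhds 1) := by
    have : Tendsto (fun k => 1 + ((N k : ℝ) - X k) / Real.sqrt (X k) * (Real.sqrt (X k))⁻¹) atTop (nhds (1 + t * 0)) := (hNr.mul hinv).const_add 1
    rw [mul_zero, add_zero] at this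
    have := this.inv₀ one_ne_zero
    rw [inv_one] at this
    refine this.congr' (hev.mono fun k hk => ?_)
    have hs : 0 < Real.sqrt (X k) := Real.sqrt_pos.2 (by linarith)
    have hq : Real.sqrt (X k) * Real.sqrt (X k) = X k := Real.mul_self_sqrt (by linarith)
    rw [div_mul_eq_mul_div, ← div_eq_mul_inv, div_div, hq]
    rw [show 1 + ((N k : ℝ) - X k) / X k = N k / X k by have : X k ≠ 0 := by linarith
                                                        field_simp; ring, inv_div]
  have hratioC : Tendsto (fun k => ((X k / N k : ℝ) : ℂ)) atTop (nhds ((1:ℝ):ℂ)) := (Complex.continuous_ofReal.tendsto _).comp hratio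
  have hfin := hratioC.mul hL
  rw [Complex.ofReal_one, one_mul] at hfin
  refine hfin.congr' ?_
  filter_upwards [hpos, hNt.eventually (eventually_ge_atTop 1)] with k hp hN1
  simp only [hg]
  rw [indicator_of_mem (by exact hp)]
  have : (N k : ℂ) ≠ 0 := by
    have : N k ≠ 0 := by omega
    exact_mod_cast this
  push_cast
  rw [← mul_assoc, div_mul_cancel₀ _ this]

lemma scale_lim (m : ℝ × ℝ) (hmS : 0 < m.1) (x y : ℕ → ℝ) (hx : Tendsto x atTop atTop) 
    (hxy : Tendsto (fun k => (y k - x k * (m.2 / m.1)) / Real.sqrt (x k)) atTop (nhds 0)) (t : ℝ) (N : ℕ → ℕ) 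
    (hN : Tendsto (fun k => ((N k : ℝ) - x k / m.1) / Real.sqrt (x k / m.1)) atTop (nhds t)) :
    Tendsto (fun k => (Real.sqrt (N k))⁻¹ • ((x k, y k) - (N k : ℝ) • m)) atTop (nhds (-t • m)) := by
  set X : ℕ → ℝ := fun k => x k / m.1 with hXdef
  have hX : Tendsto X atTop atTop := hx.atTop_div_const hmS
  have hev : ∀ᶠ k in atTop, 1 ≤ X k := hX.eventually (eventually_ge_atTop 1)
  have hsq : Tendsto (fun k => Real.sqrt (X k)) atTop atTop := Real.tendsto_sqrt_atTop.comp hX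
  have hinv : Tendsto (fun k => (Real.sqrt (X k))⁻¹) atTop (nhds 0) := tendsto_inv_atTop_zero.comp hsq
  have hratio0 : Tendsto (fun k => (N k : ℝ) / X k) atTop (nhds 1) := by
    have : Tendsto (fun k => 1 + ((N k : ℝ) - X k) / Real.sqrt (X k) * (Real.sqrt (X k))⁻¹) atTop (nhds (1 + t * 0)) := (hN.mul hinv).const_add 1
    rw [mul_zero, add_zero] at this
    refine this.congr' (hev.mono fun k hk => ?_)
    have hs : 0 < Real.sqrt (X k) := Real.sqrt_pos.2 (by linarith)
    have hq : Real.sqrt (X k) * Real.sqrt (X k) = X k := Real.mul_self_sqrt (by linarith)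
    rw [div_mul_eq_mul_div, ← div_eq_mul_inv, div_div, hq]
    have : X k ≠ 0 := by linarith
    field_simp; ring
  have hratio : Tendsto (fun k => Real.sqrt (X k) * (Real.sqrt (N k))⁻¹) atTop (nhds 1) := by
    have := (hratio0.inv₀ one_ne_zero).sqrt
    rw [inv_one, Real.sqrt_one] at this
    refine this.congr' (hev.mono fun k hk => ?_)
    rw [inv_div, Real.sqrt_div (by linarith), div_eq_mul_inv]
  have hy2 : Tendsto (fun k => (y k - X k * m.2) / Real.sqrt (X k)) atTop (nhds 0) := by
    have := hxy.mul_const (Real.sqrt m.1)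
    rw [zero_mul] at this
    refine this.congr' (hev.mono fun k hk => ?_)
    simp only [hXdef] at hk ⊢
    have hxp : 0 < x k := by
      have : 0 < x k / m.1 := by linarith
      rcases div_pos_iff.1 this with h | h
      · exact h.1
      · linarith [h.2]
    rw [Real.sqrt_div hxp.le]
    have := Real.sqrt_pos.2 hxp
    have := Real.sqrt_pos.2 hmS
    field_simp
  have c1 : Tendsto (fun k => (-(((N k : ℝ) - X k) / Real.sqrt (X k)) * m.1) * (Real.sqrt (X k) * (Real.sqrt (N k))⁻¹)) atTop (nhds ((-t * m.1) * 1)) := (hN.neg.mul_const _).mul hratio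
  have c2 : Tendsto (fun k => ((y k - X k * m.2) / Real.sqrt (X k) + -(((N k : ℝ) - X k) / Real.sqrt (X k)) * m.2) * (Real.sqrt (X k) * (Real.sqrt (N k))⁻¹)) atTop (nhds ((0 + -t * m.2) * 1)) := (hy2.add (hN.neg.mul_const _)).mul hratio
  rw [mul_one] at c1 c2
  rw [zero_add] at c2
  rw [show -t • m = (-t * m.1, -t * m.2) from rfl]
  refine Tendsto.congr' ?_ (c1.prodMk_nhds c2)
  filter_upwards [hev] with k hk
  have hs : 0 < Real.sqrt (X k) := Real.sqrt_pos.2 (by linarith)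
  have hxX : x k = X k * m.1 := by simp only [hXdef]; field_simp
  ext
  · simp only [Prod.smul_fst, Prod.fst_sub, smul_eq_mul]
    rw [hxX]; field_simp; ring
  · simp only [Prod.smul_snd, Prod.snd_sub, smul_eq_mul]
    field_simp; ring

/-- the Gaussian factor -/
lemma gauss_factor (μ : Measure (ℝ × ℝ)) [IsProbabilityMeasure μ] 
    (h1 : Integrable (fun p => p.1^2) μ) (h2 : Integrable (fun p => p.2^2) μ)
    (hND : ∀ θ : ℝ × ℝ, θ ≠ 0 → ‖cf2 μ θ‖ < 1) (m : ℝ × ℝ) (hmS : 0 < m.1) :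
    0 < ∫ p, (p.2 * m.1 - p.1 * m.2)^2 ∂μ ∧ 
    ∫ t : ℝ, (∫ τ : ℝ × ℝ, Complex.exp ((dot2 τ (-t • m) : ℝ) * Complex.I) * Complex.exp (-(QQ μ m τ : ℝ) / 2)) = 
     (((2 * Real.pi)^2 / Real.sqrt (2 * Real.pi * ∫ p, (p.2 * m.1 - p.1 * m.2)^2 ∂μ) : ℝ) : ℂ) := by
  set A := QQ μ m (1, 0) with hA
  set D := QQ μ m (0, 1) with hD
  set B := ∫ p, (p.1 - m.1) * (p.2 - m.2) ∂μ with hB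
  have iA : Integrable (fun p : ℝ × ℝ => (p.1 - m.1)^2) μ := by
    refine (dot_sq_integrable μ h1 h2 m (1, 0)).congr (ae_of_all _ fun p => ?_)
    simp [dot2]
  have iD : Integrable (fun p : ℝ × ℝ => (p.2 - m.2)^2) μ := by
    refine (dot_sq_integrable μ h1 h2 m (0, 1)).congr (ae_of_all _ fun p => ?_)
    simp [dot2]
  have iB : Integrable (fun p : ℝ × ℝ => (p.1 - m.1) * (p.2 - m.2)) μ := by
    refine (iA.add iD).mono' (Continuous.aestronglyMeasurable (by fun_prop)) (ae_of_all _ fun p => ?_)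
    rw [Real.norm_eq_abs, abs_le]
    simp only [Pi.add_apply]
    constructor <;> nlinarith [sq_nonneg ((p.1 - m.1) - (p.2 - m.2)), sq_nonneg ((p.1 - m.1) + (p.2 - m.2))]
  have hQ : ∀ τ : ℝ × ℝ, QQ μ m τ = A * τ.1^2 + 2 * B * τ.1 * τ.2 + D * τ.2^2 := by
    intro τ
    have eA : A = ∫ p, (p.1 - m.1)^2 ∂μ := by simp [hA, QQ, dot2]
    have eD : D = ∫ p, (p.2 - m.2)^2 ∂μ := by simp [hD, QQ, dot2]
    rw [eA, eD, hB]
    have j1 : Integrable (fun p : ℝ × ℝ => τ.1^2 * (p.1 - m.1)^2) μ := iA.const_mul _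
    have j2 : Integrable (fun p : ℝ × ℝ => (2 * τ.1 * τ.2) * ((p.1 - m.1) * (p.2 - m.2))) μ := iB.const_mul _
    have j3 : Integrable (fun p : ℝ × ℝ => τ.2^2 * (p.2 - m.2)^2) μ := iD.const_mul _
    have j12 : Integrable (fun p : ℝ × ℝ => τ.1^2 * (p.1 - m.1)^2 + (2 * τ.1 * τ.2) * ((p.1 - m.1) * (p.2 - m.2))) μ := j1.add j2
    have : QQ μ m τ = ∫ p, (τ.1^2 * (p.1 - m.1)^2 + (2 * τ.1 * τ.2) * ((p.1 - m.1) * (p.2 - m.2)) + τ.2^2 * (p.2 - m.2)^2) ∂μ := by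
      unfold QQ; congr 1; ext p
      simp only [dot2, Prod.fst_sub, Prod.snd_sub]; ring
    rw [this, integral_add j12 j3, integral_add j1 j2, integral_const_mul, integral_const_mul, integral_const_mul]; ring
  have hApos : 0 < A := QQ_pos μ h1 h2 hND m _ (by simp)
  have hDpos : 0 < D := QQ_pos μ h1 h2 hND m _ (by simp)
  have hΔ : 0 < A * D - B^2 := by
    have := QQ_pos μ h1 h2 hND m (D, -B) (by simp [hDpos.ne'])
    rw [hQ] at this
    have h3 : 0 < D * (A * D - B^2) := by simp only at this; nlinarith
    exact pos_of_mul_pos_right h3 hDpos.le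
  have hWe : ∫ p, (p.2 * m.1 - p.1 * m.2)^2 ∂μ = m.1^2 * D - 2 * B * m.1 * m.2 + m.2^2 * A := by
    have : ∫ p, (p.2 * m.1 - p.1 * m.2)^2 ∂μ = QQ μ m (-m.2, m.1) := by
      unfold QQ; congr 1; ext p; simp only [dot2, Prod.fst_sub, Prod.snd_sub]; ring
    rw [this, hQ]; ring
  have hW0 : 0 < ∫ p, (p.2 * m.1 - p.1 * m.2)^2 ∂μ := by
    have : ∫ p, (p.2 * m.1 - p.1 * m.2)^2 ∂μ = QQ μ m (-m.2, m.1) := by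
      unfold QQ; congr 1; ext p; simp only [dot2, Prod.fst_sub, Prod.snd_sub]; ring
    rw [this]; exact QQ_pos μ h1 h2 hND m _ (by simp [hmS.ne'])
  refine ⟨hW0, ?_⟩
  rw [← J_int A B D _ hDpos hApos hΔ hW0, ← integral_complex_ofReal]
  congr 1; ext t
  have := J_eq A B D m.1 m.2 hDpos hApos hΔ t
  rw [hWe, ← this]
  simp only [hQ]

lemma renewal_four (μ : Measure (ℝ × ℝ)) [IsProbabilityMeasure μ] 
    (h1 : Integrable (fun p => p.1^2) μ) (h2 : Integrable (fun p => p.2^2) μ)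
    (hND : ∀ θ : ℝ × ℝ, θ ≠ 0 → ‖cf2 μ θ‖ < 1) (m : ℝ × ℝ) 
    (hm1 : ∫ p, p.1 ∂μ = m.1) (hm2 : ∫ p, p.2 ∂μ = m.2) (hmS : 0 < m.1) (x y : ℕ → ℝ) (hx : Tendsto x atTop atTop) 
    (hxy : Tendsto (fun k => (y k - x k * (m.2 / m.1)) / Real.sqrt (x k)) atTop (nhds 0)) (θ₀ : ℝ × ℝ) :
    (∀ᶠ k in atTop, Summable fun n => ∫ p, hh ((x k, y k) - p) ∂(iterConv μ n)) ∧
    Tendsto (fun k => ((Real.sqrt (x k) : ℝ) : ℂ) * ∑' n, ∫ p, ((hh ((x k, y k) - p) : ℝ) : ℂ) * Complex.exp ((dot2 θ₀ ((x k, y k) - p) : ℝ) * Complex.I) ∂(iterConv μ n)) atTop 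
     (nhds (kk (-θ₀) * (Real.sqrt m.1 * ((2 * Real.pi)^2 / Real.sqrt (2 * Real.pi * ∫ p, (p.2 * m.1 - p.1 * m.2)^2 ∂μ)) : ℝ))) := by
  obtain ⟨C1, hC1, hB1⟩ := B1 μ h1 h2 hND
  obtain ⟨C2, hC2, hB2⟩ := B2 μ h1 h2 hND m.1 hm1
  have hXt : Tendsto (fun k => x k / m.1) atTop atTop := hx.atTop_div_const hmS
  have hhc := hh_cont
  have nle : ∀ (θ : ℝ × ℝ) (k n : ℕ), ‖∫ p, ((hh ((x k, y k) - p) : ℝ) : ℂ) * Complex.exp ((dot2 θ ((x k, y k) - p) : ℝ) * Complex.I) ∂(iterConv μ n)‖ ≤ ∫ p, hh ((x k, y k) - p) ∂(iterConv μ n) := by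
    intro θ k n
    refine norm_integral_le_of_norm_le (hh_integrable_shift _ _) (ae_of_all _ fun p => ?_)
    rw [norm_mul, Complex.norm_exp_ofReal_mul_I, mul_one, Complex.norm_real, Real.norm_of_nonneg (hh_pos _).le]
  have main : ∀ θ : ℝ × ℝ, _ := fun θ => renewal_abstract (fun k => x k / m.1) 
    (fun k n => ∫ p, ((hh ((x k, y k) - p) : ℝ) : ℂ) * Complex.exp ((dot2 θ ((x k, y k) - p) : ℝ) * Complex.I) ∂(iterConv μ n)) 
    (fun t => kk (-θ) * ∫ τ : ℝ × ℝ, Complex.exp ((dot2 τ (-t • m) : ℝ) * Complex.I) * Complex.exp (-(QQ μ m τ : ℝ) / 2)) hXt C1 (C2 / m.1^2) hC1 (by positivity)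
    (fun k n => (mul_le_mul_of_nonneg_left (nle θ k n) (Nat.cast_nonneg n)).trans (hB1 n _))
    (fun k n => by
      have e : (x k / m.1 - n)^2 = (x k - n * m.1)^2 / m.1^2 := by rw [← div_pow]; congr 1; field_simp
      rw [e, div_mul_eq_mul_div]
      refine div_le_div_of_nonneg_right ?_ (by positivity)
      exact (mul_le_mul_of_nonneg_left (nle θ k n) (sq_nonneg _)).trans (hB2 n (x k, y k)))
    (fun t N hN hNt => LLT μ h1 h2 hND m hm1 hm2 θ N (fun k => (x k, y k)) _ hN (scale_lim m hmS x y hx hxy t N hNt))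
  constructor
  · refine (main 0).1.mono fun k hk => hk.congr fun n => ?_
    have e : (fun p : ℝ × ℝ => ((hh ((x k, y k) - p) : ℝ) : ℂ) * Complex.exp ((dot2 0 ((x k, y k) - p) : ℝ) * Complex.I)) = fun p => ((hh ((x k, y k) - p) : ℝ) : ℂ) := by
      ext p; simp [dot2]
    have e2 : ∫ p, ((hh ((x k, y k) - p) : ℝ) : ℂ) ∂(iterConv μ n) = ((∫ p, hh ((x k, y k) - p) ∂(iterConv μ n) : ℝ) : ℂ) := integral_complex_ofReal
    rw [e, e2, Complex.norm_real, Real.norm_of_nonneg (integral_nonneg fun p => (hh_pos _).le)]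
  · have := ((main θ₀).2.const_mul ((Real.sqrt m.1 : ℝ) : ℂ))
    rw [integral_const_mul, (gauss_factor μ h1 h2 hND m hmS).2] at this
    convert this using 2
    · rw [← mul_assoc]; congr 1
      rw [← Complex.ofReal_mul, ← Real.sqrt_mul hmS.le]; congr 3; field_simp
    · push_cast; ring

lemma levy_prob (μs : ℕ → ProbabilityMeasure (ℝ × ℝ)) (μ : ProbabilityMeasure (ℝ × ℝ)) 
    (h : ∀ θ, Tendsto (fun k => cf2 (μs k) θ) atTop (nhds (cf2 μ θ))) : Tendsto μs atTop (nhds μ) := by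
  have hc : Continuous (fun p : ℝ × ℝ => WithLp.toLp 2 p) := WithLp.prod_continuous_toLp 2 ℝ ℝ
  have hc' : Continuous (fun p : WithLp 2 (ℝ × ℝ) => p.ofLp) := WithLp.prod_continuous_ofLp 2 ℝ ℝ
  have key : Tendsto (fun k => (μs k).map (hc.aemeasurable)) atTop (nhds (μ.map hc.aemeasurable)) := by
    refine ProbabilityMeasure.tendsto_of_tendsto_charFun fun t => ?_
    have e : ∀ ν : ProbabilityMeasure (ℝ × ℝ), charFun (ν.map hc.aemeasurable : Measure (WithLp 2 (ℝ × ℝ))) t = cf2 ν (t.fst, t.snd) := by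
      intro ν
      rw [charFun_apply, ProbabilityMeasure.toMeasure_map, integral_map hc.aemeasurable (Continuous.aestronglyMeasurable (by fun_prop))]
      unfold cf2
      refine integral_congr_ae (ae_of_all _ fun p => ?_)
      simp [WithLp.prod_inner_apply, dot2]
    simp only [e]
    exact h _
  have := ProbabilityMeasure.tendsto_map_of_tendsto_of_continuous _ _ key hc'
  have e2 : ∀ ν : ProbabilityMeasure (ℝ × ℝ), (ν.map hc.aemeasurable).map (hc'.aemeasurable) = ν := by
    intro ν
    apply Subtype.ext
    change ((ν.map hc.aemeasurable).map (hc'.aemeasurable) : Measure (ℝ × ℝ)) = ν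
    rw [ProbabilityMeasure.toMeasure_map, ProbabilityMeasure.toMeasure_map, Measure.map_map hc'.measurable hc.measurable]
    exact Measure.map_id
  simpa only [e2] using this

lemma cf2_zero (μ : Measure (ℝ × ℝ)) : cf2 μ 0 = μ.real univ := by
  simp [cf2, dot2]

lemma levy_finite (ρs : ℕ → FiniteMeasure (ℝ × ℝ)) (ρ : FiniteMeasure (ℝ × ℝ)) (hρ : ρ ≠ 0)
    (h : ∀ θ, Tendsto (fun k => cf2 (ρs k) θ) atTop (nhds (cf2 ρ θ))) : Tendsto ρs atTop (nhds ρ) := by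
  have hmassC := h 0
  simp only [cf2_zero] at hmassC
  have hmassR : Tendsto (fun k => ((ρs k : Measure (ℝ × ℝ))).real univ) atTop (nhds ((ρ : Measure (ℝ × ℝ)).real univ)) := by
    have := (Complex.continuous_re.tendsto _).comp hmassC
    simpa [Function.comp_def] using this
  have hmass : Tendsto (fun k => (ρs k).mass) atTop (nhds ρ.mass) := by
    rw [← NNReal.tendsto_coe]
    exact hmassR
  have hne : ∀ᶠ k in atTop, ρs k ≠ 0 := by
    have : ∀ᶠ k in atTop, (ρs k).mass ≠ 0 := hmass.eventually_ne (ρ.mass_nonzero_iff.2 hρ)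
    exact this.mono fun k hk => (ρs k).mass_nonzero_iff.1 hk
  have e : ∀ ν : FiniteMeasure (ℝ × ℝ), ν ≠ 0 → ∀ θ, cf2 (ν.normalize) θ = ((ν.mass : ℝ) : ℂ)⁻¹ * cf2 ν θ := by
    intro ν hν θ
    unfold cf2
    rw [FiniteMeasure.toMeasure_normalize_eq_of_nonzero _ hν, integral_smul_nnreal_measure, NNReal.smul_def, Complex.real_smul]
    push_cast; rfl
  refine FiniteMeasure.tendsto_of_tendsto_normalize_testAgainstNN_of_tendsto_mass (levy_prob _ _ fun θ => ?_) hmass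
  rw [e ρ hρ]
  refine Tendsto.congr' (hne.mono fun k hk => (e _ hk θ).symm) ?_
  refine Tendsto.mul (Tendsto.inv₀ ?_ ?_) (h θ)
  · exact (Complex.continuous_ofReal.tendsto _).comp ((NNReal.continuous_coe.tendsto _).comp hmass)
  · have := ρ.mass_nonzero_iff.2 hρ
    exact_mod_cast this

lemma portm (ρs : ℕ → FiniteMeasure (ℝ × ℝ)) (ρ : FiniteMeasure (ℝ × ℝ)) (hρ : ρ ≠ 0) (h : Tendsto ρs atTop (nhds ρ))
    (hac : (ρ : Measure (ℝ × ℝ)) ≪ volume) (E : Set (ℝ × ℝ)) (hE : Convex ℝ E) (hEm : MeasurableSet E) (g : BoundedContinuousFunction (ℝ × ℝ) ℝ) (hg : ∀ z, 0 < g z) :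
    Tendsto (fun k => ∫⁻ z in E, ENNReal.ofReal (g z) ∂(ρs k : Measure (ℝ × ℝ))) atTop (nhds (∫⁻ z in E, ENNReal.ofReal (g z) ∂(ρ : Measure (ℝ × ℝ)))) := by
  have hgc := g.continuous
  have fin : ∀ ν : FiniteMeasure (ℝ × ℝ), IsFiniteMeasure ((ν : Measure (ℝ × ℝ)).withDensity fun z => ENNReal.ofReal (g z)) := by
    intro ν
    apply isFiniteMeasure_withDensity_ofReal
    exact (g.integrable (ν : Measure (ℝ × ℝ))).2
  set τ : FiniteMeasure (ℝ × ℝ) → FiniteMeasure (ℝ × ℝ) := fun ν => ⟨(ν : Measure (ℝ × ℝ)).withDensity fun z => ENNReal.ofReal (g z), fin ν⟩ with hτ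
  have hτm : ∀ ν, (τ ν : Measure (ℝ × ℝ)) = (ν : Measure (ℝ × ℝ)).withDensity fun z => ENNReal.ofReal (g z) := fun ν => rfl
  have hgm : Measurable fun z => ENNReal.ofReal (g z) := by fun_prop
  have ht : Tendsto (fun k => τ (ρs k)) atTop (nhds (τ ρ)) := by
    rw [FiniteMeasure.tendsto_iff_forall_integral_tendsto]
    intro f
    have e : ∀ ν, ∫ z, f z ∂(τ ν : Measure (ℝ × ℝ)) = ∫ z, (g * f) z ∂(ν : Measure (ℝ × ℝ)) := by
      intro ν
      rw [hτm, integral_withDensity_eq_integral_toReal_smul hgm (ae_of_all _ fun z => ofReal_lt_top)]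
      congr 1; ext z
      rw [ENNReal.toReal_ofReal (hg z).le]; rfl
    simp only [e]
    exact FiniteMeasure.tendsto_iff_forall_integral_tendsto.1 h (g * f)
  have hτ0 : τ ρ ≠ 0 := by
    intro h0
    have h1 : (ρ : Measure (ℝ × ℝ)).withDensity (fun z => ENNReal.ofReal (g z)) = 0 := by
      rw [← hτm, h0]; rfl
    rw [withDensity_eq_zero_iff hgm.aemeasurable] at h1
    apply hρ
    apply Subtype.ext
    change (ρ : Measure (ℝ × ℝ)) = 0
    rw [← Measure.measure_univ_eq_zero]
    rw [Filter.EventuallyEq, ae_iff] at h1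
    convert h1
    symm; rw [eq_univ_iff_forall]; intro z
    simp [hg z]
  have hn := FiniteMeasure.tendsto_normalize_of_tendsto ht hτ0
  have hfr : ((τ ρ).normalize : Measure (ℝ × ℝ)) (frontier E) = 0 := by
    rw [FiniteMeasure.toMeasure_normalize_eq_of_nonzero _ hτ0, hτm]
    simp only [Measure.smul_apply]
    rw [(withDensity_absolutelyContinuous _ _) (hac (hE.addHaar_frontier volume)), smul_zero]
  have hP := ProbabilityMeasure.tendsto_measure_of_null_frontier_of_tendsto' hn hfr
  have hmass : Tendsto (fun k => ((τ (ρs k)).mass : ℝ≥0∞)) atTop (nhds ((τ ρ).mass : ℝ≥0∞)) := by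
    rw [ENNReal.tendsto_coe]; exact ht.mass
  have e : ∀ ν, ((τ ν).mass : ℝ≥0∞) * ((τ ν).normalize : Measure (ℝ × ℝ)) E = ∫⁻ z in E, ENNReal.ofReal (g z) ∂(ν : Measure (ℝ × ℝ)) := by
    intro ν
    rw [← withDensity_apply _ hEm, ← hτm]
    have := (τ ν).self_eq_mass_mul_normalize E
    have h2 := congrArg (fun r : NNReal => (r : ℝ≥0∞)) this
    simp only [ENNReal.coe_mul] at h2
    rw [FiniteMeasure.ennreal_coeFn_eq_coeFn_toMeasure] at h2
    rw [h2]; congr 1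
    rw [ProbabilityMeasure.ennreal_coeFn_eq_coeFn_toMeasure]
  simp only [← e]
  exact ENNReal.Tendsto.mul hmass (Or.inr (measure_ne_top _ _)) hP (Or.inr (by simp))

noncomputable def nuM (μ : Measure (ℝ × ℝ)) (z : ℝ × ℝ) : Measure (ℝ × ℝ) :=
  ENNReal.ofReal (Real.sqrt z.1) • Measure.sum (fun n => (iterConv μ n).map (fun p => z - p))

lemma lintegral_nuM (μ : Measure (ℝ × ℝ)) (z : ℝ × ℝ) (f : ℝ × ℝ → ℝ≥0∞) (hf : Measurable f) :
    ∫⁻ u, f u ∂(nuM μ z) = ENNReal.ofReal (Real.sqrt z.1) * ∑' n, ∫⁻ p, f (z - p) ∂(iterConv μ n) := by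
  unfold nuM
  rw [lintegral_smul_measure, lintegral_sum_measure, smul_eq_mul]
  congr 2; ext n
  rw [lintegral_map hf (by fun_prop)]

noncomputable def rhoM (μ : Measure (ℝ × ℝ)) (z : ℝ × ℝ) : Measure (ℝ × ℝ) :=
  (nuM μ z).withDensity fun u => ENNReal.ofReal (hh u)

lemma hh_meas : Measurable hh := hh_cont.measurable

lemma rhoM_univ (μ : Measure (ℝ × ℝ)) [IsProbabilityMeasure μ] (z : ℝ × ℝ) (hs : Summable fun n => ∫ p, hh (z - p) ∂(iterConv μ n)) :
    rhoM μ z univ = ENNReal.ofReal (Real.sqrt z.1 * ∑' n, ∫ p, hh (z - p) ∂(iterConv μ n)) := by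
  have := hh_meas
  unfold rhoM
  rw [withDensity_apply _ MeasurableSet.univ, Measure.restrict_univ, lintegral_nuM _ _ _ (by fun_prop), ENNReal.ofReal_mul (Real.sqrt_nonneg _),
    ENNReal.ofReal_tsum_of_nonneg (fun n => integral_nonneg fun p => (hh_pos _).le) hs]
  congr 2; ext n
  rw [ofReal_integral_eq_lintegral_ofReal (hh_integrable_shift _ _) (ae_of_all _ fun p => (hh_pos _).le)]

lemma cf2_rhoM (μ : Measure (ℝ × ℝ)) [IsProbabilityMeasure μ] (z : ℝ × ℝ) (hs : Summable fun n => ∫ p, hh (z - p) ∂(iterConv μ n)) (θ : ℝ × ℝ) :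
    cf2 (rhoM μ z) θ = ((Real.sqrt z.1 : ℝ) : ℂ) * ∑' n, ∫ p, ((hh (z - p) : ℝ) : ℂ) * Complex.exp ((dot2 θ (z - p) : ℝ) * Complex.I) ∂(iterConv μ n) := by
  have hm := hh_meas
  have hcc := hh_cont
  unfold cf2 rhoM nuM
  rw [withDensity_smul_measure, integral_smul_measure, ENNReal.toReal_ofReal (Real.sqrt_nonneg _), Complex.real_smul]
  congr 1
  rw [integral_withDensity_eq_integral_toReal_smul (by fun_prop) (ae_of_all _ fun z => ofReal_lt_top), integral_sum_measure]
  · congr 1; ext n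
    rw [integral_map (by fun_prop)]
    · refine integral_congr_ae (ae_of_all _ fun p => ?_)
      simp only
      rw [ENNReal.toReal_ofReal (hh_pos _).le, Complex.real_smul]
    · refine Measurable.aestronglyMeasurable ?_
      have : Continuous fun x : ℝ × ℝ => Complex.exp ((dot2 θ x : ℝ) * Complex.I) := by fun_prop
      have := this.measurable
      fun_prop
  · rw [integrable_sum_measure_iff]
    have e : ∀ u : ℝ × ℝ, ‖(ENNReal.ofReal (hh u)).toReal • Complex.exp ((dot2 θ u : ℝ) * Complex.I)‖ = hh u := by
      intro u
      rw [norm_smul, Complex.norm_exp_ofReal_mul_I, mul_one, ENNReal.toReal_ofReal (hh_pos _).le, Real.norm_of_nonneg (hh_pos _).le]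
    have hmeas : Measurable fun u : ℝ × ℝ => (ENNReal.ofReal (hh u)).toReal • Complex.exp ((dot2 θ u : ℝ) * Complex.I) := by
      have : Continuous fun x : ℝ × ℝ => Complex.exp ((dot2 θ x : ℝ) * Complex.I) := by fun_prop
      have := this.measurable
      fun_prop
    constructor
    · intro n
      rw [integrable_map_measure hmeas.aestronglyMeasurable (by fun_prop)]
      refine (hh_integrable_shift (iterConv μ n) z).mono' (hmeas.comp (by fun_prop)).aestronglyMeasurable (ae_of_all _ fun p => ?_)
      simp only [Function.comp_def]
      rw [e]
    · simp only [e]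
      refine hs.congr fun n => ?_
      rw [integral_map (by fun_prop) hcc.aestronglyMeasurable]

noncomputable def rhoL (c : ℝ) : Measure (ℝ × ℝ) := volume.withDensity fun u => ENNReal.ofReal (c * hh u)

instance rhoL_fin (c : ℝ) : IsFiniteMeasure (rhoL c) := isFiniteMeasure_withDensity_ofReal (hh_integrable.const_mul c).2

lemma cf2_rhoL (c : ℝ) (hc : 0 < c) (θ : ℝ × ℝ) : cf2 (rhoL c) θ = (c * (2 * Real.pi)^2 : ℝ) * kk (-θ) := by
  have hm := hh_meas
  unfold cf2 rhoL
  rw [integral_withDensity_eq_integral_toReal_smul (by fun_prop) (ae_of_all _ fun z => ofReal_lt_top)]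
  have := hh_four θ
  push_cast
  rw [mul_assoc, ← this, ← integral_const_mul]
  refine integral_congr_ae (ae_of_all _ fun p => ?_)
  simp only
  rw [ENNReal.toReal_ofReal (mul_pos hc (hh_pos _)).le, Complex.real_smul]; push_cast; ring

lemma rhoL_ne (c : ℝ) (hc : 0 < c) : rhoL c ≠ 0 := by
  intro h
  have h1 := cf2_rhoL c hc 0
  rw [h] at h1
  simp only [cf2, integral_zero_measure, neg_zero] at h1
  have hk : kk 0 = 4 := by simp [kk, kap_zero]; norm_num
  rw [hk] at h1
  have : (c * (2 * Real.pi)^2 : ℝ) ≠ 0 := by positivity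
  have h4 : ((c * (2 * Real.pi)^2 : ℝ) : ℂ) ≠ 0 := by exact_mod_cast this
  exact (mul_ne_zero h4 (by norm_num)) h1.symm

lemma poly_le (δ : ℝ) (hδ : 0 < δ) : ∃ C > 0, ∀ u : ℝ, 1 + u^2 ≤ C * Real.exp (δ * |u|) := by
  refine ⟨1 + 2 / δ^2, by positivity, fun u => ?_⟩
  have h1 := Real.quadratic_le_exp_of_nonneg (x := δ * |u|) (by positivity)
  have h2 : 1 ≤ Real.exp (δ * |u|) := Real.one_le_exp (by positivity)
  have h3 : u^2 = 2 / δ^2 * ((δ * |u|)^2 / 2) := by rw [mul_pow, sq_abs]; field_simp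
  have h4 : (δ * |u|)^2 / 2 ≤ Real.exp (δ * |u|) := by have : 0 ≤ δ * |u| := by positivity
                                                       linarith
  rw [h3, add_mul, one_mul]
  exact add_le_add h2 (mul_le_mul_of_nonneg_left h4 (by positivity))

def Eq' (a b : ℝ) (q : ℝ × ℝ) : Set (ℝ × ℝ) := {z | 0 ≤ z.1 ∧ z.1 < q.1 - a ∧ z.2 ≤ q.2 - b}

noncomputable def Gq (ξ η : ℝ) (q z : ℝ × ℝ) : ℝ := Real.exp (ξ * (q.1 - z.1) + η * (q.2 - z.2))

lemma Eq'_meas (a b : ℝ) (q : ℝ × ℝ) : MeasurableSet (Eq' a b q) := by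
  unfold Eq'
  measurability

lemma Eq'_convex (a b : ℝ) (q : ℝ × ℝ) : Convex ℝ (Eq' a b q) := by
  have : Eq' a b q = (Ico 0 (q.1 - a)) ×ˢ (Iic (q.2 - b)) := by
    ext z; simp [Eq', and_assoc]
  rw [this]
  exact (convex_Ico _ _).prod (convex_Iic _)

lemma Gq_bound (ξ η a b : ℝ) (hη : η < 0) (ha : 0 ≤ a) : ∃ C > 0, ∀ q : ℝ × ℝ, ∀ z ∈ Eq' a b q, 
    Gq ξ η q z ≤ C * ((1 + q.1^2) * (1 + q.2^2) * (1 + Real.exp (ξ * q.1))) * hh z := by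
  obtain ⟨C0, hC0, hp⟩ := poly_le (-η) (by linarith)
  refine ⟨50 * (C0 * (1 + Real.exp (2 * η * b))), by positivity, fun q z hz => ?_⟩
  obtain ⟨z1, z2, z3⟩ := hz
  have e1 : Real.exp (ξ * (q.1 - z.1)) ≤ 1 + Real.exp (ξ * q.1) := by
    rcases le_or_gt 0 ξ with h | h
    · have : Real.exp (ξ * (q.1 - z.1)) ≤ Real.exp (ξ * q.1) := Real.exp_le_exp.2 (by nlinarith)
      linarith
    · have : Real.exp (ξ * (q.1 - z.1)) ≤ 1 := Real.exp_le_one_iff.2 (by nlinarith)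
      linarith [Real.exp_pos (ξ * q.1)]
  set u := q.2 - z.2 with hu
  have e2 : (1 + u^2) * Real.exp (η * u) ≤ C0 * (1 + Real.exp (2 * η * b)) := by
    have h3 : Real.exp (-η * |u|) * Real.exp (η * u) ≤ 1 + Real.exp (2 * η * b) := by
      rw [← Real.exp_add]
      rcases le_or_gt 0 u with h | h
      · rw [abs_of_nonneg h]
        have : -η * u + η * u = 0 := by ring
        rw [this, Real.exp_zero]; linarith [Real.exp_pos (2 * η * b)]
      · rw [abs_of_neg h]
        have : Real.exp (-η * -u + η * u) ≤ Real.exp (2 * η * b) := Real.exp_le_exp.2 (by nlinarith)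
        linarith
    calc (1 + u^2) * Real.exp (η * u) ≤ (C0 * Real.exp (-η * |u|)) * Real.exp (η * u) := mul_le_mul_of_nonneg_right (hp u) (Real.exp_pos _).le
      _ = C0 * (Real.exp (-η * |u|) * Real.exp (η * u)) := by ring
      _ ≤ _ := mul_le_mul_of_nonneg_left h3 hC0.le
  have hhz : 1 / (25 * ((1 + z.1^2) * (1 + z.2^2))) ≤ hh z := by
    have := mul_le_mul (HH_ge z.1) (HH_ge z.2) (by positivity) (HH_pos _).le
    unfold hh
    refine le_trans (le_of_eq ?_) this
    field_simp; norm_num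
  have hz1 : 1 + z.1^2 ≤ 1 + q.1^2 := by nlinarith
  have hz2 : 1 + z.2^2 ≤ 2 * (1 + q.2^2) * (1 + u^2) := by
    have : z.2 = q.2 - u := by rw [hu]; ring
    rw [this]; nlinarith [sq_nonneg (q.2 + u), sq_nonneg (q.2 * u)]
  rw [div_le_iff₀ (by positivity)] at hhz
  have hG : Gq ξ η q z = Real.exp (ξ * (q.1 - z.1)) * Real.exp (η * u) := by
    unfold Gq; rw [Real.exp_add]
  rw [hG]
  have hpz := hh_pos z
  have key : 1 ≤ hh z * (25 * ((1 + q.1^2) * (2 * (1 + q.2^2) * (1 + u^2)))) := by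
    refine hhz.trans (mul_le_mul_of_nonneg_left ?_ hpz.le)
    refine mul_le_mul_of_nonneg_left ?_ (by norm_num)
    exact mul_le_mul hz1 hz2 (by positivity) (by positivity)
  calc Real.exp (ξ * (q.1 - z.1)) * Real.exp (η * u) ≤ (Real.exp (ξ * (q.1 - z.1)) * Real.exp (η * u)) * (hh z * (25 * ((1 + q.1^2) * (2 * (1 + q.2^2) * (1 + u^2))))) := le_mul_of_one_le_right (by positivity) key
    _ = 50 * hh z * ((1 + q.1^2) * (1 + q.2^2)) * (Real.exp (ξ * (q.1 - z.1)) * ((1 + u^2) * Real.exp (η * u))) := by ring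
    _ ≤ 50 * hh z * ((1 + q.1^2) * (1 + q.2^2)) * ((1 + Real.exp (ξ * q.1)) * (C0 * (1 + Real.exp (2 * η * b)))) := by
        refine mul_le_mul_of_nonneg_left ?_ (by positivity)
        exact mul_le_mul e1 e2 (by positivity) (by positivity)
    _ = _ := by ring

instance nuM_sfinite (μ : Measure (ℝ × ℝ)) [IsProbabilityMeasure μ] (z : ℝ × ℝ) : SFinite (nuM μ z) := by
  unfold nuM; infer_instance

lemma Eq'_meas2 (a b : ℝ) : MeasurableSet {x : (ℝ × ℝ) × (ℝ × ℝ) | x.2 ∈ Eq' a b x.1} := by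
  have : {x : (ℝ × ℝ) × (ℝ × ℝ) | x.2 ∈ Eq' a b x.1} = {x | 0 ≤ x.2.1} ∩ ({x | x.2.1 < x.1.1 - a} ∩ {x | x.2.2 ≤ x.1.2 - b}) := rfl
  rw [this]
  refine MeasurableSet.inter ?_ (MeasurableSet.inter ?_ ?_)
  · exact measurableSet_le (by fun_prop) (by fun_prop)
  · exact measurableSet_lt (by fun_prop) (by fun_prop)
  · exact measurableSet_le (by fun_prop) (by fun_prop)

lemma Gq_meas2 (ξ η : ℝ) : Measurable fun x : (ℝ × ℝ) × (ℝ × ℝ) => Gq ξ η x.1 x.2 := by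
  unfold Gq; fun_prop

lemma Gq_cont (ξ η : ℝ) (q : ℝ × ℝ) : Continuous (Gq ξ η q) := by
  unfold Gq; fun_prop

lemma inner_meas (ξ η a b c : ℝ) (ν : Measure (ℝ × ℝ)) [SFinite ν] : 
    Measurable fun q : ℝ × ℝ => ∫⁻ z in Eq' a b q, ENNReal.ofReal (c * Gq ξ η q z) ∂ν := by
  have h := Gq_meas2 ξ η
  have e : (fun q : ℝ × ℝ => ∫⁻ z in Eq' a b q, ENNReal.ofReal (c * Gq ξ η q z) ∂ν) = 
      fun q => ∫⁻ z, ({x : (ℝ × ℝ) × (ℝ × ℝ) | x.2 ∈ Eq' a b x.1}.indicator fun x => ENNReal.ofReal (c * Gq ξ η x.1 x.2)) (q, z) ∂ν := by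
    ext q
    rw [← lintegral_indicator (Eq'_meas a b q)]
    congr 1
  rw [e]
  refine Measurable.lintegral_prod_right' ?_
  exact Measurable.indicator (by fun_prop) (Eq'_meas2 a b)

lemma gq_transfer (ξ η a b c : ℝ) (q : ℝ × ℝ) (ν ρ : Measure (ℝ × ℝ)) (hc : 0 < c) (hρ : ρ = ν.withDensity fun u => ENNReal.ofReal (c * hh u)) (g : ℝ × ℝ → ℝ) (hgm : Measurable g)
    (hg : ∀ z ∈ Eq' a b q, g z = Gq ξ η q z / hh z) :
    ∫⁻ z in Eq' a b q, ENNReal.ofReal (g z) ∂ρ = ∫⁻ z in Eq' a b q, ENNReal.ofReal (c * Gq ξ η q z) ∂ν := by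
  have hm := hh_meas
  rw [hρ, setLIntegral_withDensity_eq_setLIntegral_mul _ (by fun_prop) (by fun_prop) (Eq'_meas a b q)]
  refine setLIntegral_congr_fun (Eq'_meas a b q) fun z hz => ?_
  simp only [Pi.mul_apply]
  rw [← ENNReal.ofReal_mul (mul_pos hc (hh_pos z)).le, hg z hz]
  congr 1
  have := (hh_pos z).ne'
  field_simp

lemma nu_conv (μ : Measure (ℝ × ℝ)) [IsProbabilityMeasure μ] 
    (h1 : Integrable (fun p => p.1^2) μ) (h2 : Integrable (fun p => p.2^2) μ)
    (hND : ∀ θ : ℝ × ℝ, θ ≠ 0 → ‖cf2 μ θ‖ < 1) (m : ℝ × ℝ) 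
    (hm1 : ∫ p, p.1 ∂μ = m.1) (hm2 : ∫ p, p.2 ∂μ = m.2) (hmS : 0 < m.1) (x y : ℕ → ℝ) (hx : Tendsto x atTop atTop) 
    (hxy : Tendsto (fun k => (y k - x k * (m.2 / m.1)) / Real.sqrt (x k)) atTop (nhds 0)) 
    (hs : ∀ k, Summable fun n => ∫ p, hh ((x k, y k) - p) ∂(iterConv μ n)) (c : ℝ) (hcdef : c = Real.sqrt m.1 / Real.sqrt (2 * Real.pi * ∫ p, (p.2 * m.1 - p.1 * m.2)^2 ∂μ)) 
    (ξ η a b : ℝ) (hη : η < 0) (ha : 0 ≤ a) 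
    (hI : Integrable (fun q : ℝ × ℝ => (1 + q.1^2) * (1 + q.2^2) * (1 + Real.exp (ξ * q.1))) μ) :
    Tendsto (fun k => ∫⁻ q, ∫⁻ z in Eq' a b q, ENNReal.ofReal (Gq ξ η q z) ∂(nuM μ (x k, y k)) ∂μ) atTop 
      (nhds (∫⁻ q, ∫⁻ z in Eq' a b q, ENNReal.ofReal (c * Gq ξ η q z) ∂volume ∂μ)) := by
  have hW := (gauss_factor μ h1 h2 hND m hmS).1
  have hc : 0 < c := by
    rw [hcdef]; have := Real.pi_pos; positivity
  have hmm := hh_meas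
  have hcc := hh_cont
  have hfin : ∀ k, IsFiniteMeasure (rhoM μ (x k, y k)) := fun k => ⟨by rw [rhoM_univ _ _ (hs k)]; exact ofReal_lt_top⟩
  set ρs : ℕ → FiniteMeasure (ℝ × ℝ) := fun k => ⟨rhoM μ (x k, y k), hfin k⟩ with hρs
  set ρ : FiniteMeasure (ℝ × ℝ) := ⟨rhoL c, rhoL_fin c⟩ with hρ
  have hρ0 : ρ ≠ 0 := by
    intro h
    apply rhoL_ne c hc
    exact congrArg (fun ν : FiniteMeasure (ℝ × ℝ) => (ν : Measure (ℝ × ℝ))) h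
  have hconv : Tendsto ρs atTop (nhds ρ) := by
    refine levy_finite ρs ρ hρ0 fun θ => ?_
    change Tendsto (fun k => cf2 (rhoM μ (x k, y k)) θ) atTop (nhds (cf2 (rhoL c) θ))
    simp only [cf2_rhoM _ _ (hs _), cf2_rhoL c hc]
    convert (renewal_four μ h1 h2 hND m hm1 hm2 hmS x y hx hxy θ).2 using 2
    rw [mul_comm]; congr 2; rw [hcdef]; ring
  -- mass bound
  have hmass : ∀ᶠ k in atTop, rhoM μ (x k, y k) univ ≤ ((ρ.mass + 1 : NNReal) : ℝ≥0∞) := by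
    have := hconv.mass.eventually (gt_mem_nhds (show ρ.mass < ρ.mass + 1 by simp))
    refine this.mono fun k hk => ?_
    have e : rhoM μ (x k, y k) univ = ((ρs k).mass : ℝ≥0∞) := by
      rw [FiniteMeasure.ennreal_mass]; rfl
    rw [e]; exact_mod_cast hk.le
  obtain ⟨C, hC, hb⟩ := Gq_bound ξ η a b hη ha
  set M : ℝ × ℝ → ℝ := fun q => C * ((1 + q.1^2) * (1 + q.2^2) * (1 + Real.exp (ξ * q.1))) with hM
  have hMpos : ∀ q, 0 < M q := fun q => by simp only [hM]; positivity
  -- the bounded continuous weight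
  have hpt : ∀ q, Tendsto (fun k => ∫⁻ z in Eq' a b q, ENNReal.ofReal (Gq ξ η q z) ∂(nuM μ (x k, y k))) atTop (nhds (∫⁻ z in Eq' a b q, ENNReal.ofReal (c * Gq ξ η q z))) := by
    intro q
    set gf : ℝ × ℝ → ℝ := fun z => min (Gq ξ η q z / hh z) (M q) with hgf
    have hgc : Continuous gf := by
      refine Continuous.min ((Gq_cont ξ η q).div hcc fun z => (hh_pos z).ne') continuous_const
    have hgpos : ∀ z, 0 < gf z := fun z => lt_min (div_pos (Real.exp_pos _) (hh_pos z)) (hMpos q)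
    set g : BoundedContinuousFunction (ℝ × ℝ) ℝ := BoundedContinuousFunction.ofNormedAddCommGroup gf hgc (M q) (fun z => by
      rw [Real.norm_of_nonneg (hgpos z).le]; exact min_le_right _ _) with hg
    have hgE : ∀ z ∈ Eq' a b q, gf z = Gq ξ η q z / hh z := by
      intro z hz
      exact min_eq_left ((div_le_iff₀ (hh_pos z)).2 (hb q z hz))
    have P := portm ρs ρ hρ0 hconv (withDensity_absolutelyContinuous _ _) (Eq' a b q) (Eq'_convex a b q) (Eq'_meas a b q) g hgpos
    have e1 : ∫⁻ z in Eq' a b q, ENNReal.ofReal (g z) ∂(ρ : Measure (ℝ × ℝ)) = ∫⁻ z in Eq' a b q, ENNReal.ofReal (c * Gq ξ η q z) := 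
      gq_transfer ξ η a b c q volume (rhoL c) hc rfl gf hgc.measurable hgE
    have e2 : ∀ k, ∫⁻ z in Eq' a b q, ENNReal.ofReal (g z) ∂(ρs k : Measure (ℝ × ℝ)) = ∫⁻ z in Eq' a b q, ENNReal.ofReal (Gq ξ η q z) ∂(nuM μ (x k, y k)) := by
      intro k
      have := gq_transfer ξ η a b 1 q (nuM μ (x k, y k)) (rhoM μ (x k, y k)) one_pos (by unfold rhoM; simp) gf hgc.measurable hgE
      simp only [one_mul] at this
      exact this
    rw [e1] at P
    simp only [e2] at P
    exact P
  have hbd : ∀ k q, ∫⁻ z in Eq' a b q, ENNReal.ofReal (Gq ξ η q z) ∂(nuM μ (x k, y k)) ≤ ENNReal.ofReal (M q) * rhoM μ (x k, y k) univ := by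
    intro k q
    unfold rhoM
    rw [withDensity_apply _ MeasurableSet.univ, Measure.restrict_univ, ← lintegral_const_mul _ (by fun_prop)]
    refine le_trans (setLIntegral_mono' (g := fun z => ENNReal.ofReal (M q) * ENNReal.ofReal (hh z)) (Eq'_meas a b q) fun z hz => ?_) (setLIntegral_le_lintegral _ _)
    rw [← ENNReal.ofReal_mul (hMpos q).le]
    exact ENNReal.ofReal_le_ofReal (hb q z hz)
  refine tendsto_lintegral_filter_of_dominated_convergence (fun q => ENNReal.ofReal (M q) * ((ρ.mass + 1 : NNReal) : ℝ≥0∞)) 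
    (Eventually.of_forall fun k => ?_) (hmass.mono fun k hk => ae_of_all _ fun q => (hbd k q).trans (mul_le_mul_right hk _)) ?_ (ae_of_all _ hpt)
  · have := inner_meas ξ η a b 1 (nuM μ (x k, y k))
    simpa only [one_mul] using this
  · rw [lintegral_mul_const _ (by simp only [hM]; fun_prop)]
    refine ENNReal.mul_ne_top ?_ coe_ne_top
    exact ((hI.const_mul C).lintegral_lt_top).ne

noncomputable def ew (ξ η : ℝ) (p : ℝ × ℝ) : ℝ≥0∞ := ENNReal.ofReal (Real.exp (ξ * p.1 + η * p.2))

@[fun_prop]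
lemma ew_meas (ξ η : ℝ) : Measurable (ew ξ η) := by unfold ew; fun_prop

lemma ew_add (ξ η : ℝ) (p q : ℝ × ℝ) : ew ξ η (p + q) = ew ξ η p * ew ξ η q := by
  unfold ew
  rw [← ENNReal.ofReal_mul (Real.exp_pos _).le, ← Real.exp_add]; congr 2
  simp only [Prod.fst_add, Prod.snd_add]; ring

lemma iterConv_tilt (F μ : Measure (ℝ × ℝ)) [SFinite F] [IsProbabilityMeasure μ] (ξ η : ℝ)
    (hF : F = μ.withDensity (ew ξ η)) (n : ℕ) : iterConv F n = (iterConv μ n).withDensity (ew ξ η) := by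
  induction n with
  | zero => 
    ext s hs
    classical
    rw [withDensity_apply _ hs]
    simp only [iterConv]
    rw [setLIntegral_dirac' (ew_meas _ _) hs, Measure.dirac_apply' _ hs]
    by_cases h : (0 : ℝ × ℝ) ∈ s <;> simp [h, ew]
  | succ n ih => 
    change Measure.map (fun p : (ℝ × ℝ) × (ℝ × ℝ) => p.1 + p.2) ((iterConv F n).prod F) = 
      (Measure.map (fun p : (ℝ × ℝ) × (ℝ × ℝ) => p.1 + p.2) ((iterConv μ n).prod μ)).withDensity (ew ξ η)
    have : SFinite (iterConv F n) := by rw [ih]; infer_instance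
    ext s hs
    rw [withDensity_apply _ hs, Measure.map_apply (by fun_prop) hs, setLIntegral_map hs (by fun_prop) (by fun_prop)]
    have hs' : MeasurableSet ((fun p : (ℝ × ℝ) × (ℝ × ℝ) => p.1 + p.2) ⁻¹' s) := (by fun_prop : Measurable (fun p : (ℝ × ℝ) × (ℝ × ℝ) => p.1 + p.2)) hs
    have : (iterConv F n).prod F = ((iterConv μ n).prod μ).withDensity (fun x => ew ξ η x.1 * ew ξ η x.2) := by
      rw [ih]; nth_rewrite 1 [hF]
      rw [prod_withDensity (by fun_prop) (by fun_prop)]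
    rw [this, withDensity_apply _ hs']
    simp only [ew_add]

lemma K_eq (F μ : Measure (ℝ × ℝ)) [SFinite F] [IsProbabilityMeasure μ] (ξ η : ℝ)
    (hF : F = μ.withDensity (ew ξ η)) (a b x y : ℝ) : 
    ENNReal.ofReal (Real.sqrt x) * hoglundK F a b x y = ENNReal.ofReal (Real.exp (ξ * x + η * y)) * 
      ∫⁻ q, ∫⁻ z in Eq' a b q, ENNReal.ofReal (Gq ξ η q z) ∂(nuM μ (x, y)) ∂μ := by
  have hG := Gq_meas2 ξ η
  set J : (ℝ × ℝ) × (ℝ × ℝ) → ℝ≥0∞ := 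
    {x : (ℝ × ℝ) × (ℝ × ℝ) | x.2 ∈ Eq' a b x.1}.indicator (fun x => ENNReal.ofReal (Gq ξ η x.1 x.2)) with hJ
  have hJm : Measurable J := Measurable.indicator (by fun_prop) (Eq'_meas2 a b)
  have e1 : ∀ q, ∫⁻ z in Eq' a b q, ENNReal.ofReal (Gq ξ η q z) ∂(nuM μ (x, y)) = 
      ENNReal.ofReal (Real.sqrt x) * ∑' n, ∫⁻ p, J (q, (x, y) - p) ∂(iterConv μ n) := by
    intro q
    rw [← lintegral_indicator (Eq'_meas a b q)]
    have := lintegral_nuM μ (x, y) (fun z => J (q, z)) (by fun_prop)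
    rw [← this]; congr 1
  simp_rw [e1]
  have hm : ∀ n, Measurable fun q : ℝ × ℝ => ∫⁻ p, J (q, (x, y) - p) ∂(iterConv μ n) := by
    intro n
    exact Measurable.lintegral_prod_right' (f := fun z : (ℝ × ℝ) × (ℝ × ℝ) => J (z.1, (x, y) - z.2)) (by fun_prop)
  rw [lintegral_const_mul _ (Measurable.tsum hm), lintegral_tsum (fun n => (hm n).aemeasurable), mul_left_comm, ← ENNReal.tsum_mul_left]
  congr 1
  unfold hoglundK
  refine tsum_congr fun n => ?_
  have hS : MeasurableSet {p : ℝ × ℝ | p.1 ≤ x} := measurableSet_le (by fun_prop) (by fun_prop)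
  have hmm : MeasurableSet {w : (ℝ × ℝ) × (ℝ × ℝ) | x + a < w.1.1 + w.2.1 ∧ y + b ≤ w.1.2 + w.2.2} := by
    have : {w : (ℝ × ℝ) × (ℝ × ℝ) | x + a < w.1.1 + w.2.1 ∧ y + b ≤ w.1.2 + w.2.2} = 
      {w | x + a < w.1.1 + w.2.1} ∩ {w | y + b ≤ w.1.2 + w.2.2} := rfl
    rw [this]
    exact MeasurableSet.inter (measurableSet_lt (by fun_prop) (by fun_prop)) (measurableSet_le (by fun_prop) (by fun_prop))
  have hA : ∀ p : ℝ × ℝ, MeasurableSet {q : ℝ × ℝ | x + a < p.1 + q.1 ∧ y + b ≤ p.2 + q.2} := 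
    fun p => measurable_prodMk_left (x := p) hmm
  rw [lintegral_lintegral_swap (by fun_prop), ← lintegral_const_mul _ (by
    exact Measurable.lintegral_prod_right' (f := fun z : (ℝ × ℝ) × (ℝ × ℝ) => J (z.2, (x, y) - z.1)) (by fun_prop))]
  have key : ∀ p, {p : ℝ × ℝ | p.1 ≤ x}.indicator (fun p => ew ξ η p * F {q : ℝ × ℝ | x + a < p.1 + q.1 ∧ y + b ≤ p.2 + q.2}) p = 
     ENNReal.ofReal (Real.exp (ξ * x + η * y)) * ∫⁻ q, J (q, (x, y) - p) ∂μ := by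
    intro p
    by_cases hp : p.1 ≤ x
    · rw [indicator_of_mem (by exact hp), hF, withDensity_apply _ (hA p), ← lintegral_indicator (hA p),
        ← lintegral_const_mul _ ((ew_meas ξ η).indicator (hA p)), ← lintegral_const_mul _ (by fun_prop)]
      congr 1; ext q
      by_cases hq : x + a < p.1 + q.1 ∧ y + b ≤ p.2 + q.2
      · have : (q, (x, y) - p) ∈ {x : (ℝ × ℝ) × (ℝ × ℝ) | x.2 ∈ Eq' a b x.1} := by
          simp only [Eq', Set.mem_ofPred_eq, Prod.fst_sub, Prod.snd_sub]
          refine ⟨?_, ?_, ?_⟩ <;> linarith [hq.1, hq.2]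
        rw [indicator_of_mem (by exact hq), hJ, indicator_of_mem this]
        unfold ew Gq
        rw [← ENNReal.ofReal_mul (Real.exp_pos _).le, ← ENNReal.ofReal_mul (Real.exp_pos _).le, ← Real.exp_add, ← Real.exp_add]
        congr 2; simp only [Prod.fst_sub, Prod.snd_sub]; ring
      · have : (q, (x, y) - p) ∉ {x : (ℝ × ℝ) × (ℝ × ℝ) | x.2 ∈ Eq' a b x.1} := by
          simp only [Eq', Set.mem_ofPred_eq, Prod.fst_sub, Prod.snd_sub]
          rintro ⟨_, h2, h3⟩
          exact hq ⟨by linarith, by linarith⟩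
        rw [indicator_of_notMem (by exact hq), hJ, indicator_of_notMem this]; simp
    · rw [indicator_of_notMem (by exact hp)]
      have : ∀ q, J (q, (x, y) - p) = 0 := by
        intro q
        rw [hJ, indicator_of_notMem]
        simp only [Eq', Set.mem_ofPred_eq, Prod.fst_sub, Prod.snd_sub]
        rintro ⟨h, _⟩; exact hp (by linarith)
      simp [this]
  simp_rw [← key]
  rw [iterConv_tilt F μ ξ η hF n, lintegral_indicator hS]
  rw [setLIntegral_withDensity_eq_setLIntegral_mul _ (by fun_prop) _ hS]
  · rfl
  · exact measurable_measure_prodMk_left hmm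

lemma shift_lint (g : ℝ → ℝ≥0∞) (t : ℝ) (S T : Set ℝ) (hS : MeasurableSet S) (hT : MeasurableSet T) 
    (h : ∀ z, z ∈ S ↔ t - z ∈ T) : ∫⁻ z in S, g (t - z) = ∫⁻ w in T, g w := by
  rw [← lintegral_indicator hS, ← lintegral_indicator hT, ← lintegral_sub_left_eq_self (T.indicator g) t]
  congr 1; ext z
  by_cases hz : z ∈ S
  · rw [indicator_of_mem hz, indicator_of_mem ((h z).1 hz)]
  · rw [indicator_of_notMem hz, indicator_of_notMem (fun h' => hz ((h z).2 h'))]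

lemma exp_Ici (η b : ℝ) (hη : η < 0) : ∫⁻ w in Ici b, ENNReal.ofReal (Real.exp (η * w)) = ENNReal.ofReal (Real.exp (b * η) / |η|) := by
  rw [setLIntegral_congr Ioi_ae_eq_Ici.symm, ← ofReal_integral_eq_lintegral_ofReal (integrableOn_exp_mul_Ioi hη b) (ae_of_all _ fun _ => (Real.exp_pos _).le),
    integral_exp_mul_Ioi hη b, abs_of_neg hη, mul_comm]
  congr 1; rw [div_neg, neg_div]

lemma inner_eq (ξ η a b c : ℝ) (hη : η < 0) (hc : 0 < c) (q : ℝ × ℝ) :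
    ∫⁻ z in Eq' a b q, ENNReal.ofReal (c * Gq ξ η q z) = 
      ENNReal.ofReal (c * (Real.exp (b * η) / |η|)) * ∫⁻ w in Ioc a q.1, ENNReal.ofReal (Real.exp (ξ * w)) := by
  have e : Eq' a b q = Ico 0 (q.1 - a) ×ˢ Iic (q.2 - b) := by
    ext z; simp only [Eq', Set.mem_ofPred_eq, mem_prod, mem_Ico, mem_Iic, and_assoc]
  have e2 : ∀ z : ℝ × ℝ, ENNReal.ofReal (c * Gq ξ η q z) = ENNReal.ofReal c * (ENNReal.ofReal (Real.exp (ξ * (q.1 - z.1))) * ENNReal.ofReal (Real.exp (η * (q.2 - z.2)))) := by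
    intro z
    unfold Gq
    rw [ENNReal.ofReal_mul hc.le, Real.exp_add, ENNReal.ofReal_mul (Real.exp_pos _).le]
  simp_rw [e2]
  rw [lintegral_const_mul _ (by fun_prop), e, Measure.volume_eq_prod, ← Measure.prod_restrict, 
    lintegral_prod_mul (f := fun z => ENNReal.ofReal (Real.exp (ξ * (q.1 - z)))) (g := fun z => ENNReal.ofReal (Real.exp (η * (q.2 - z)))) (by fun_prop) (by fun_prop),
    shift_lint (fun w => ENNReal.ofReal (Real.exp (ξ * w))) q.1 _ (Ioc a q.1) measurableSet_Ico measurableSet_Ioc,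
    shift_lint (fun w => ENNReal.ofReal (Real.exp (η * w))) q.2 _ (Ici b) measurableSet_Iic measurableSet_Ici, exp_Ici η b hη,
    ENNReal.ofReal_mul hc.le]
  · ring
  · intro z; simp only [mem_Iic, mem_Ici]; constructor <;> intro h <;> linarith
  · intro z; simp only [mem_Ico, mem_Ioc]; constructor <;> rintro ⟨h, h'⟩ <;> constructor <;> linarith

lemma limit_eq (μ : Measure (ℝ × ℝ)) [IsProbabilityMeasure μ] (ξ η a b c : ℝ) (hη : η < 0) (hc : 0 < c) :
    ∫⁻ q, ∫⁻ z in Eq' a b q, ENNReal.ofReal (c * Gq ξ η q z) ∂volume ∂μ = 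
      ENNReal.ofReal (c * (Real.exp (b * η) / |η|)) * ∫⁻ s in Ioi a, ENNReal.ofReal ((μ {p : ℝ × ℝ | s ≤ p.1}).toReal * Real.exp (ξ * s)) := by
  simp_rw [inner_eq ξ η a b c hη hc]
  rw [lintegral_const_mul' _ _ ofReal_ne_top]
  congr 1
  have hD : MeasurableSet {w : (ℝ × ℝ) × ℝ | w.2 ≤ w.1.1} := measurableSet_le (by fun_prop) (by fun_prop)
  set J : (ℝ × ℝ) × ℝ → ℝ≥0∞ := {w : (ℝ × ℝ) × ℝ | w.2 ≤ w.1.1}.indicator (fun w => ENNReal.ofReal (Real.exp (ξ * w.2))) with hJ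
  have hJm : Measurable J := Measurable.indicator (by fun_prop) hD
  have e1 : ∀ q : ℝ × ℝ, ∫⁻ w in Ioc a q.1, ENNReal.ofReal (Real.exp (ξ * w)) = ∫⁻ w in Ioi a, J (q, w) := by
    intro q
    rw [← lintegral_indicator measurableSet_Ioc, ← lintegral_indicator measurableSet_Ioi]
    congr 1; ext w
    by_cases h1 : a < w <;> by_cases h2 : w ≤ q.1 <;> simp [indicator, hJ, h1, h2]
  simp_rw [e1]
  rw [lintegral_lintegral_swap (by fun_prop)]
  congr 1; ext w
  rw [ENNReal.ofReal_mul toReal_nonneg, ofReal_toReal (measure_ne_top _ _), mul_comm, ← lintegral_indicator_const (s := {p : ℝ × ℝ | w ≤ p.1})]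
  · congr 1
  · exact measurableSet_le (by fun_prop) (by fun_prop)

lemma limit_fin (μ : Measure (ℝ × ℝ)) [IsProbabilityMeasure μ] (ξ η a b c : ℝ) (hη : η < 0) (hc : 0 < c) (ha : 0 ≤ a) 
    (hI : Integrable (fun q : ℝ × ℝ => (1 + q.1^2) * (1 + q.2^2) * (1 + Real.exp (ξ * q.1))) μ) :
    ∫⁻ q, ∫⁻ z in Eq' a b q, ENNReal.ofReal (c * Gq ξ η q z) ∂volume ∂μ ≠ ⊤ := by
  simp_rw [inner_eq ξ η a b c hη hc]
  rw [lintegral_const_mul' _ _ ofReal_ne_top]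
  refine ENNReal.mul_ne_top ofReal_ne_top (ne_of_lt (lt_of_le_of_lt (lintegral_mono (fun q => ?_)) hI.lintegral_lt_top))
  have : ∀ w ∈ Ioc a q.1, ENNReal.ofReal (Real.exp (ξ * w)) ≤ ENNReal.ofReal (1 + Real.exp (ξ * q.1)) := by
    intro w hw
    apply ENNReal.ofReal_le_ofReal
    rcases le_total 0 ξ with h | h
    · have : Real.exp (ξ * w) ≤ Real.exp (ξ * q.1) := Real.exp_le_exp.2 (by nlinarith [hw.1, hw.2])
      linarith
    · have : Real.exp (ξ * w) ≤ 1 := Real.exp_le_one_iff.2 (by nlinarith [hw.1, hw.2])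
      linarith [Real.exp_pos (ξ * q.1)]
  refine (setLIntegral_mono' measurableSet_Ioc this).trans ?_
  rw [setLIntegral_const, Real.volume_Ioc, ← ENNReal.ofReal_mul (by positivity)]
  apply ENNReal.ofReal_le_ofReal
  rw [mul_comm]
  refine mul_le_mul_of_nonneg_right ?_ (by positivity)
  nlinarith [sq_nonneg (q.1 - 1), sq_nonneg (q.1), sq_nonneg (q.1 * q.2), sq_nonneg q.2]

lemma nd_of_G (F μ : Measure (ℝ × ℝ)) [IsProbabilityMeasure μ] (hFμ : F ≪ μ)
    (hG : {p : ℝ × ℝ | 0 ≤ p.1 ∧ 0 ≤ p.2} ⊆ (AddSubgroup.closure (msupport F) : Set (ℝ × ℝ))) (θ : ℝ × ℝ) (hθ : θ ≠ 0) :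
    ‖cf2 μ θ‖ < 1 := by
  have hle : ‖cf2 μ θ‖ ≤ 1 := by
    unfold cf2
    refine (norm_integral_le_integral_norm _).trans ?_
    simp [Complex.norm_exp_ofReal_mul_I]
  refine lt_of_le_of_ne hle fun h1 => ?_
  set u := cf2 μ θ with hu
  have hu0 : u ≠ 0 := by rintro h; rw [h] at h1; simp at h1
  have hIntg : Integrable (fun p => Complex.exp ((dot2 θ p : ℝ) * Complex.I)) μ := exp_dot_integrable μ (by unfold dot2; fun_prop)
  have huu : (starRingEnd ℂ) u * u = 1 := by
    rw [← Complex.normSq_eq_conj_mul_self, Complex.normSq_eq_norm_sq, h1]; simp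
  have hIntg2 : Integrable (fun p => ((starRingEnd ℂ) u * Complex.exp ((dot2 θ p : ℝ) * Complex.I)).re) μ := (hIntg.const_mul _).re
  have h0 : ∫ p, (1 - ((starRingEnd ℂ) u * Complex.exp ((dot2 θ p : ℝ) * Complex.I)).re) ∂μ = 0 := by
    rw [integral_sub (integrable_const _) hIntg2]
    have := integral_re (hIntg.const_mul ((starRingEnd ℂ) u))
    simp only [RCLike.re_eq_complex_re] at this
    rw [this, integral_const_mul]
    change _ - ((starRingEnd ℂ) u * u).re = 0
    rw [huu]; simp
  have hnn : ∀ p, 0 ≤ 1 - ((starRingEnd ℂ) u * Complex.exp ((dot2 θ p : ℝ) * Complex.I)).re := by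
    intro p
    have := Complex.re_le_norm ((starRingEnd ℂ) u * Complex.exp ((dot2 θ p : ℝ) * Complex.I))
    rw [norm_mul, Complex.norm_exp_ofReal_mul_I, RCLike.norm_conj, h1] at this
    linarith
  rw [integral_eq_zero_iff_of_nonneg hnn ((integrable_const _).sub hIntg2)] at h0
  have hae : ∀ᵐ p ∂μ, Complex.exp ((dot2 θ p : ℝ) * Complex.I) = u := by
    filter_upwards [h0] with p hp
    set w := (starRingEnd ℂ) u * Complex.exp ((dot2 θ p : ℝ) * Complex.I) with hw
    have hw1 : ‖w‖ = 1 := by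
      rw [hw, norm_mul, Complex.norm_exp_ofReal_mul_I, RCLike.norm_conj, h1, one_mul]
    have hre : w.re = 1 := by simp only [Pi.zero_apply] at hp; linarith
    have him : w.im = 0 := by
      have : w.re * w.re + w.im * w.im = 1 := by
        rw [← Complex.normSq_apply, Complex.normSq_eq_norm_sq, hw1]; norm_num
      rw [hre] at this
      nlinarith
    have hw2 : w = 1 := Complex.ext (by simp [hre]) (by simp [him])
    have : u * w = u := by rw [hw2, mul_one]
    rw [hw, ← mul_assoc, mul_comm u, huu, one_mul] at this
    exact this
  have haeF : ∀ᵐ p ∂F, Complex.exp ((dot2 θ p : ℝ) * Complex.I) = u := hFμ.ae_le hae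
  have hcont : Continuous fun p : ℝ × ℝ => Complex.exp ((dot2 θ p : ℝ) * Complex.I) := by unfold dot2; fun_prop
  have hsupp : ∀ p ∈ msupport F, Complex.exp ((dot2 θ p : ℝ) * Complex.I) = u := by
    intro p hp
    by_contra hne
    have hop : IsOpen {p : ℝ × ℝ | Complex.exp ((dot2 θ p : ℝ) * Complex.I) ≠ u} := isOpen_ne.preimage hcont
    have := hp _ hop hne
    rw [ae_iff] at haeF
    exact this.ne' haeF
  let H : AddSubgroup (ℝ × ℝ) := 
    { carrier := {p | ∃ k : ℤ, Complex.exp ((dot2 θ p : ℝ) * Complex.I) = u ^ k}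
      zero_mem' := ⟨0, by simp [dot2]⟩
      add_mem' := by
        rintro p q ⟨k, hk⟩ ⟨l, hl⟩
        refine ⟨k + l, ?_⟩
        rw [zpow_add₀ hu0, ← hk, ← hl, ← Complex.exp_add]; congr 1
        simp only [dot2, Prod.fst_add, Prod.snd_add]; push_cast; ring
      neg_mem' := by
        rintro p ⟨k, hk⟩
        refine ⟨-k, ?_⟩
        rw [zpow_neg, ← hk, ← Complex.exp_neg]; congr 1
        simp only [dot2, Prod.fst_neg, Prod.snd_neg]; push_cast; ring }
  have hH : ∀ p : ℝ × ℝ, 0 ≤ p.1 → 0 ≤ p.2 → p ∈ H := by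
    intro p h1 h2
    have : AddSubgroup.closure (msupport F) ≤ H := by
      rw [AddSubgroup.closure_le]
      intro q hq
      exact ⟨1, by rw [hsupp q hq, zpow_one]⟩
    exact this (hG ⟨h1, h2⟩)
  have hall : ∀ τ : ℝ, ∃ k : ℤ, Complex.exp (τ * Complex.I) = u ^ k := by
    intro τ
    have key : ∀ p : ℝ × ℝ, p ∈ H → dot2 θ p = τ → ∃ k : ℤ, Complex.exp (τ * Complex.I) = u ^ k := by
      rintro p ⟨k, hk⟩ h
      exact ⟨k, by rw [← h]; exact hk⟩
    by_cases ht : θ.1 = 0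
    · have ht2 : θ.2 ≠ 0 := fun h => hθ (Prod.ext ht h)
      refine key (0, τ / θ.2) ?_ (by simp only [dot2]; field_simp; ring)
      rcases le_total 0 (τ / θ.2) with h | h
      · exact hH _ le_rfl h
      · have := H.neg_mem (hH (0, -(τ / θ.2)) le_rfl (by simpa using h))
        simpa using this
    · refine key (τ / θ.1, 0) ?_ (by simp only [dot2]; field_simp; ring)
      rcases le_total 0 (τ / θ.1) with h | h
      · exact hH _ h le_rfl
      · have := H.neg_mem (hH (-(τ / θ.1), 0) (by simpa using h) le_rfl)
        simpa using this
  obtain ⟨k, hk⟩ := hall (Complex.arg u / 2)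
  obtain ⟨j, hj⟩ := hall Real.pi
  rw [Complex.exp_pi_mul_I] at hj
  have e2 : u ^ (2 * k) = u := by
    rw [mul_comm, zpow_mul, ← hk]
    change _ ^ ((2 : ℕ) : ℤ) = _
    rw [zpow_natCast, ← Complex.exp_nat_mul]
    nth_rewrite 2 [← Complex.norm_mul_exp_arg_mul_I u]
    rw [h1]; push_cast; rw [one_mul]; congr 1; ring
  have e3 : u ^ (2 * k - 1) = 1 := by
    rw [zpow_sub_one₀ hu0, e2, mul_inv_cancel₀ hu0]
  have e4 : (-1 : ℂ) ^ (2 * k - 1) = 1 := by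
    rw [hj, ← zpow_mul, mul_comm, zpow_mul, e3, one_zpow]
  rw [Odd.neg_one_zpow ⟨k - 1, by ring⟩] at e4
  norm_num at e4

lemma tilt_lap (F μ : Measure (ℝ × ℝ)) (ξ η : ℝ) 
    (hμ : μ = F.withDensity (fun p => ENNReal.ofReal (Real.exp (-(ξ * p.1 + η * p.2))))) (α β : ℝ) 
    (h : biLaplace F (ξ - α) (η - β) < ⊤) : Integrable (fun p : ℝ × ℝ => Real.exp (α * p.1 + β * p.2)) μ := by
  refine ⟨Continuous.aestronglyMeasurable (by fun_prop), ?_⟩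
  rw [hasFiniteIntegral_iff_ofReal (ae_of_all _ fun _ => (Real.exp_pos _).le), hμ, 
    lintegral_withDensity_eq_lintegral_mul _ (by fun_prop) (by fun_prop)]
  refine lt_of_eq_of_lt ?_ h
  unfold biLaplace
  congr 1; ext p
  simp only [Pi.mul_apply]
  rw [← ENNReal.ofReal_mul (Real.exp_pos _).le, ← Real.exp_add]; congr 2; ring

lemma hI_of (F μ : Measure (ℝ × ℝ)) (ξ η : ℝ) 
    (hμ : μ = F.withDensity (fun p => ENNReal.ofReal (Real.exp (-(ξ * p.1 + η * p.2))))) 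
    (hnn : ∀ᵐ p ∂μ, 0 ≤ p.1 ∧ 0 ≤ p.2)
    (hnbd : ∃ ε > 0, ∀ u w : ℝ, |u - ξ| < ε → |w - η| < ε → biLaplace F u w < ⊤)
    (hnbd0 : ∃ ε > 0, ∀ u w : ℝ, |u| < ε → |w - η| < ε → biLaplace F u w < ⊤) :
    Integrable (fun q : ℝ × ℝ => (1 + q.1^2) * (1 + q.2^2) * (1 + Real.exp (ξ * q.1))) μ := by
  obtain ⟨ε, hε, h⟩ := hnbd
  obtain ⟨ε0, hε0, h0⟩ := hnbd0
  set δ := min ε ε0 / 2 with hδ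
  have hm : 0 < min ε ε0 := lt_min hε hε0
  have hδ0 : 0 < δ := by positivity
  have d1 : δ < ε := by have := min_le_left ε ε0; linarith
  have d2 : δ < ε0 := by have := min_le_right ε ε0; linarith
  have i1 := tilt_lap F μ ξ η hμ δ δ (h _ _ (by rw [abs_lt]; constructor <;> linarith) (by rw [abs_lt]; constructor <;> linarith))
  have i2 := tilt_lap F μ ξ η hμ (ξ + δ) δ (h0 _ _ (by rw [abs_lt]; constructor <;> linarith) (by rw [abs_lt]; constructor <;> linarith))
  obtain ⟨C, hC, hp⟩ := poly_le δ hδ0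
  refine Integrable.mono' ((i1.add i2).const_mul (C * C)) (Continuous.aestronglyMeasurable (by fun_prop)) ?_
  filter_upwards [hnn] with q hq
  rw [Real.norm_of_nonneg (by positivity)]
  have a1 := hp q.1
  have a2 := hp q.2
  rw [abs_of_nonneg hq.1] at a1
  rw [abs_of_nonneg hq.2] at a2
  have a3 : (1 + q.1^2) * (1 + q.2^2) ≤ (C * Real.exp (δ * q.1)) * (C * Real.exp (δ * q.2)) := mul_le_mul a1 a2 (by positivity) (by positivity)
  refine (mul_le_mul_of_nonneg_right a3 (by positivity)).trans (le_of_eq ?_)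
  simp only [Pi.add_apply, Real.exp_add, add_mul]
  ring

lemma seq_conv (v mS mR : ℝ) (hS : 0 < mS) (hR : 0 < mR) (hv : v = mS / mR) (x y : ℕ → ℝ) 
    (hy : Tendsto y atTop atTop) 
    (h : Tendsto (fun n => (x n - v * y n) / Real.sqrt (y n)) atTop (nhds 0)) : 
    Tendsto x atTop atTop ∧ Tendsto (fun k => (y k - x k * (mR / mS)) / Real.sqrt (x k)) atTop (nhds 0) := by
  have hv0 : 0 < v := by rw [hv]; positivity
  have hsy : Tendsto (fun n => Real.sqrt (y n)) atTop atTop := Real.tendsto_sqrt_atTop.comp hy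
  have hpos : ∀ᶠ n in atTop, 0 < y n := hy.eventually_gt_atTop 0
  have hr : Tendsto (fun n => x n / y n) atTop (nhds v) := by
    have h2 : Tendsto (fun n => (x n - v * y n) / Real.sqrt (y n) * (Real.sqrt (y n))⁻¹ + v) atTop (nhds (0 * 0 + v)) := 
      (h.mul hsy.inv_tendsto_atTop).add_const v
    rw [zero_mul, zero_add] at h2
    refine h2.congr' ?_
    filter_upwards [hpos] with n hn
    have : Real.sqrt (y n) * Real.sqrt (y n) = y n := Real.mul_self_sqrt hn.le
    rw [← div_eq_mul_inv, div_div, this]; field_simp; ring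
  refine ⟨?_, ?_⟩
  · refine (hr.pos_mul_atTop hv0 hy).congr' ?_
    filter_upwards [hpos] with n hn
    field_simp
  · have h3 : Tendsto (fun n => Real.sqrt (x n / y n)) atTop (nhds (Real.sqrt v)) := (Real.continuous_sqrt.tendsto v).comp hr
    have h4 := (h.mul (h3.inv₀ (Real.sqrt_pos.2 hv0).ne')).mul_const (-(mR / mS))
    rw [zero_mul, zero_mul] at h4
    refine h4.congr' ?_
    filter_upwards [hpos] with n hn
    rw [Real.sqrt_div' _ hn.le, inv_div]
    have := Real.sqrt_pos.2 hn
    rw [div_mul_div_cancel₀ this.ne', div_mul_eq_mul_div]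
    congr 1
    rw [hv]; field_simp; ring

lemma pos_mean (μ : Measure (ℝ × ℝ)) [IsProbabilityMeasure μ] (θ : ℝ × ℝ) (hθ : ‖cf2 μ θ‖ < 1) 
    (hnn : ∀ᵐ p ∂μ, 0 ≤ dot2 θ p) (hi : Integrable (fun p => dot2 θ p) μ) : 0 < ∫ p, dot2 θ p ∂μ := by
  refine lt_of_le_of_ne (integral_nonneg_of_ae hnn) fun h => ?_
  rw [eq_comm, integral_eq_zero_iff_of_nonneg_ae hnn hi] at h
  have : cf2 μ θ = 1 := by
    unfold cf2
    have e : ∫ p, Complex.exp ((dot2 θ p : ℝ) * Complex.I) ∂μ = ∫ p, (1 : ℂ) ∂μ := by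
      refine integral_congr_ae ?_
      filter_upwards [h] with p hp
      rw [hp]; simp
    rw [e]; simp
  rw [this] at hθ; simp at hθ

theorem hoglund_renewal_K (F : Measure (ℝ × ℝ))
    -- `F` is a subprobability measure on `[0,∞)²`
    (hFsupp : F {p : ℝ × ℝ | p.1 < 0 ∨ p.2 < 0} = 0)
    (hFmass : F Set.univ ≤ 1)
    -- condition (G)
    (hG : {p : ℝ × ℝ | 0 ≤ p.1 ∧ 0 ≤ p.2} ⊆
      (AddSubgroup.closure (msupport F) : Set (ℝ × ℝ)))
    (ξ η : ℝ) (hη : η < 0)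
    -- `φ(ζ) = 1`
    (hζ : biLaplace F ξ η = 1)
    -- `φ` finite in a neighbourhood of `ζ` and of `(0,η)`
    (hnbd : ∃ ε > 0, ∀ u w : ℝ, |u - ξ| < ε → |w - η| < ε → biLaplace F u w < ⊤)
    (hnbd0 : ∃ ε > 0, ∀ u w : ℝ, |u| < ε → |w - η| < ε → biLaplace F u w < ⊤)
    -- the tilted step law `F_ζ(ds,dr) = e^{-ξs-ηr} F(ds,dr)` (using `φ(ζ) = 1`)
    (Fζ : Measure (ℝ × ℝ))
    (hFζ : Fζ = F.withDensity (fun p => ENNReal.ofReal (Real.exp (-(ξ * p.1 + η * p.2)))))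
    -- `mS = E_ζ[S₁]`, `mR = E_ζ[R₁]`, `v = mS/mR`, `V = V(ζ)`
    (mS mR v V : ℝ)
    (hmS : mS = ∫ p, p.1 ∂Fζ) (hmR : mR = ∫ p, p.2 ∂Fζ)
    (hv : v = mS / mR)
    (hV : V = (∫ p, (p.2 * mS - p.1 * mR) ^ 2 ∂Fζ) / mS ^ 3) :
    0 < V ∧
    ∀ a b : ℝ, 0 ≤ a → ∀ x y : ℕ → ℝ,
      Tendsto y atTop atTop → (∀ n, 0 < x n) →
      Tendsto (fun n => (x n - v * y n) / Real.sqrt (y n)) atTop (nhds 0) →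
      Tendsto (fun n => (hoglundK F a b (x n) (y n)).toReal /
          (x n ^ (-(1:ℝ) / 2) * Real.exp (x n * ξ + y n * η))) atTop
        (nhds ((Real.exp (b * η) / (|η| * mS) *
            ∫ s in Set.Ioi a, (Fζ {p : ℝ × ℝ | s ≤ p.1}).toReal * Real.exp (ξ * s)) *
          (Real.sqrt (2 * Real.pi * V))⁻¹)) := by
  have hFfin : IsFiniteMeasure F := ⟨lt_of_le_of_lt hFmass ENNReal.one_lt_top⟩
  have hpr : IsProbabilityMeasure Fζ := ⟨by
    rw [hFζ, withDensity_apply _ MeasurableSet.univ, Measure.restrict_univ]; exact hζ⟩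
  have hF : F = Fζ.withDensity (ew ξ η) := by
    rw [hFζ, ← withDensity_mul _ (by fun_prop) (by fun_prop)]
    have : ((fun p : ℝ × ℝ => ENNReal.ofReal (Real.exp (-(ξ * p.1 + η * p.2)))) * ew ξ η) = 1 := by
      ext p
      simp only [Pi.mul_apply, ew, Pi.one_apply]
      rw [← ENNReal.ofReal_mul (Real.exp_pos _).le, ← Real.exp_add]; simp
    rw [this, withDensity_one]
  have hFac : F ≪ Fζ := by
    nth_rewrite 1 [hF]; exact withDensity_absolutelyContinuous _ _
  have hnnF : ∀ᵐ p ∂F, 0 ≤ p.1 ∧ 0 ≤ p.2 := by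
    rw [ae_iff]
    convert hFsupp using 3
    ext p
    rw [not_and_or, not_le, not_le]
  have hnn : ∀ᵐ p ∂Fζ, 0 ≤ p.1 ∧ 0 ≤ p.2 := by
    have : Fζ ≪ F := by rw [hFζ]; exact withDensity_absolutelyContinuous _ _
    exact this.ae_le hnnF
  have hI := hI_of F Fζ ξ η hFζ hnn hnbd hnbd0
  have hND := nd_of_G F Fζ hFac hG
  have h1 : Integrable (fun p : ℝ × ℝ => p.1^2) Fζ := by
    refine hI.mono' (Continuous.aestronglyMeasurable (by fun_prop)) (ae_of_all _ fun p => ?_)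
    rw [Real.norm_of_nonneg (sq_nonneg _)]
    have e := (Real.exp_pos (ξ * p.1)).le
    calc p.1^2 ≤ (1 + p.1^2) * (1 + p.2^2) * 1 := by nlinarith [sq_nonneg p.1, sq_nonneg p.2, sq_nonneg (p.1 * p.2)]
      _ ≤ _ := mul_le_mul_of_nonneg_left (by linarith) (by positivity)
  have h2 : Integrable (fun p : ℝ × ℝ => p.2^2) Fζ := by
    refine hI.mono' (Continuous.aestronglyMeasurable (by fun_prop)) (ae_of_all _ fun p => ?_)
    rw [Real.norm_of_nonneg (sq_nonneg _)]
    have e := (Real.exp_pos (ξ * p.1)).le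
    calc p.2^2 ≤ (1 + p.1^2) * (1 + p.2^2) * 1 := by nlinarith [sq_nonneg p.1, sq_nonneg p.2, sq_nonneg (p.1 * p.2)]
      _ ≤ _ := mul_le_mul_of_nonneg_left (by linarith) (by positivity)
  have i1 := integrable_of_sq Fζ (fun p => p.1) continuous_fst h1
  have i2 := integrable_of_sq Fζ (fun p => p.2) continuous_snd h2
  have mS0 : 0 < mS := by
    have := pos_mean Fζ (1, 0) (hND _ (by simp)) (by filter_upwards [hnn] with p hp; simpa [dot2] using hp.1) (by simpa [dot2] using i1)
    rw [hmS]; simpa [dot2] using this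
  have mR0 : 0 < mR := by
    have := pos_mean Fζ (0, 1) (hND _ (by simp)) (by filter_upwards [hnn] with p hp; simpa [dot2] using hp.2) (by simpa [dot2] using i2)
    rw [hmR]; simpa [dot2] using this
  have hW : 0 < ∫ p, (p.2 * mS - p.1 * mR)^2 ∂Fζ := (gauss_factor Fζ h1 h2 hND (mS, mR) mS0).1
  have hV0 : 0 < V := by rw [hV]; positivity
  refine ⟨hV0, fun a b ha x y hy hx h => ?_⟩
  obtain ⟨hxt, hxy⟩ := seq_conv v mS mR mS0 mR0 hv x y hy h
  obtain ⟨k0, hk0⟩ := eventually_atTop.1 (renewal_four Fζ h1 h2 hND (mS, mR) hmS.symm hmR.symm mS0 x y hxt hxy 0).1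
  set c := Real.sqrt mS / Real.sqrt (2 * Real.pi * ∫ p, (p.2 * mS - p.1 * mR)^2 ∂Fζ) with hc
  have hpi := Real.pi_pos
  have hc0 : 0 < c := by positivity
  have hcV : c = mS⁻¹ * (Real.sqrt (2 * Real.pi * V))⁻¹ := by
    have e : 2 * Real.pi * ∫ p, (p.2 * mS - p.1 * mR)^2 ∂Fζ = (2 * Real.pi * V) * mS^2 * mS := by
      rw [hV]; generalize (∫ p, (p.2 * mS - p.1 * mR)^2 ∂Fζ) = W; field_simp
    rw [hc, e, Real.sqrt_mul (by positivity), Real.sqrt_mul (by positivity), Real.sqrt_sq mS0.le]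
    have := Real.sqrt_pos.2 mS0
    have : 0 < Real.sqrt (2 * Real.pi * V) := Real.sqrt_pos.2 (by positivity)
    field_simp
  have main := nu_conv Fζ h1 h2 hND (mS, mR) hmS.symm hmR.symm mS0 (fun k => x (k + k0)) (fun k => y (k + k0)) 
    ((tendsto_add_atTop_iff_nat k0).2 hxt) ((tendsto_add_atTop_iff_nat (f := fun k => (y k - x k * (mR / mS)) / Real.sqrt (x k)) k0).2 hxy) 
    (fun k => hk0 (k + k0) (by omega)) c rfl ξ η a b hη ha hI
  have main2 := (ENNReal.tendsto_toReal (limit_fin Fζ ξ η a b c hη hc0 ha hI)).comp main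
  rw [limit_eq Fζ ξ η a b c hη hc0, ENNReal.toReal_mul, ENNReal.toReal_ofReal (by positivity), 
    ← integral_eq_lintegral_of_nonneg_ae (ae_of_all _ fun s => mul_nonneg toReal_nonneg (Real.exp_pos _).le)] at main2
  · rw [← tendsto_add_atTop_iff_nat k0]
    convert main2 using 1
    · ext k
      simp only [Function.comp]
      have hxk := hx (k + k0)
      have := congrArg ENNReal.toReal (K_eq F Fζ ξ η hF a b (x (k + k0)) (y (k + k0)))
      rw [ENNReal.toReal_mul, ENNReal.toReal_mul, ENNReal.toReal_ofReal (Real.sqrt_nonneg _), ENNReal.toReal_ofReal (Real.exp_pos _).le] at this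
      have e : x (k + k0) ^ (-(1:ℝ)/2) = (Real.sqrt (x (k + k0)))⁻¹ := by
        rw [neg_div, Real.rpow_neg hxk.le, ← Real.sqrt_eq_rpow]
      have e2 : Real.exp (x (k + k0) * ξ + y (k + k0) * η) = Real.exp (ξ * x (k + k0) + η * y (k + k0)) := by
        congr 1; ring
      have hs := Real.sqrt_pos.2 hxk
      rw [e, e2, div_eq_iff (by positivity)]
      have he := Real.exp_pos (ξ * x (k + k0) + η * y (k + k0))
      rw [mul_left_comm, mul_comm _ (Real.exp _), ← this]
      field_simp
    · congr 1
      rw [hcV]; generalize (∫ s in Ioi a, (Fζ {p : ℝ × ℝ | s ≤ p.1}).toReal * Real.exp (ξ * s)) = W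
      rw [div_mul_eq_div_div]; ring
  · refine AEStronglyMeasurable.mul ?_ (Continuous.aestronglyMeasurable (by fun_prop))
    refine Measurable.aestronglyMeasurable (Measurable.ennreal_toReal (Antitone.measurable ?_))
    intro s t hst
    exact measure_mono fun p (hp : t ≤ p.1) => le_trans hst hp
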